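/- Let n ≥ 0, let κ = (κ_1,…,κ_ℓ) ∈ Z^ℓ be a multicharge, and let e be an integer with e > max{n + κ_k − κ_l : 1 ≤ k,l ≤ ℓ}. Let K be a field containing an invertible element ξ_0 that is not a root of unity and an invertible element ξ_e that is a primitive e-th root of unity. Then the cyclotomic Hecke algebras H_n(K, ξ_0, κ) and H_n(K, ξ_e, κ) are isomorphic as K-algebras. -/

import Mathlib

open scoped BigOperators
open scoped Classical

namespace Paper

/-! ## Quantum integers -/

/-- The quantum integer `[d]_x` in a field, for `d ∈ ℤ`. -/
noncomputable def qint {K : Type*} [Field K] (x : K) (d : ℤ) : K :=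
  if 0 ≤ d then ∑ k ∈ Finset.range d.toNat, x ^ k
  else -∑ k ∈ Finset.range (-d).toNat, x ^ (-((k : ℤ) + 1))

/-- The quantum integer `[d]_t` in a commutative ring, for an invertible `t` and `d ∈ ℤ`. -/
def qintU {O : Type*} [CommRing O] (t : Oˣ) (d : ℤ) : O :=
  if 0 ≤ d then ∑ k ∈ Finset.range d.toNat, (t : O) ^ k
  else -∑ k ∈ Finset.range (-d).toNat, ((t ^ (-((k : ℤ) + 1)) : Oˣ) : O)

/-! ## Nodes, multipartitions and standard tableaux -/

/-- A node `(l, r, c)`: component `l`, row `r`, column `c` (all `0`-based). -/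
abbrev Node : Type := ℕ × ℕ × ℕ

/-- `nodeBelow A B` holds when `B` is strictly below `A`, i.e. `A < B` lexicographically. -/
def nodeBelow (A B : Node) : Prop :=
  A.1 < B.1 ∨ (A.1 = B.1 ∧ (A.2.1 < B.2.1 ∨ (A.2.1 = B.2.1 ∧ A.2.2 < B.2.2)))

/-- An `ℓ`-multipartition of `n`. -/
structure Multipartition (ℓ n : ℕ) : Type where
  part : ℕ → ℕ → ℕ
  comp_bound : ∀ l, ℓ ≤ l → ∀ r, part l r = 0
  antitone : ∀ l, Antitone (part l)
  row_bound : ∀ l r, n ≤ r → part l r = 0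
  size : (∑ l ∈ Finset.range ℓ, ∑ r ∈ Finset.range n, part l r) = n

/-- The diagram of a multipartition. -/
def Multipartition.diagram {ℓ n : ℕ} (μ : Multipartition ℓ n) : Set Node :=
  {A | A.2.2 < μ.part A.1 A.2.1}

/-- A standard tableau: a bijection from the diagram of its shape onto `{1, …, n}`
that increases along rows and down columns of each component (it takes the value
`0` off the diagram, so that it is determined by its entries). -/
structure StdTableau (ℓ n : ℕ) : Type where
  shape : Multipartition ℓ n
  entry : Node → ℕ
  entry_zero : ∀ A, A ∉ shape.diagram → entry A = 0
  bijOn : Set.BijOn entry shape.diagram (Set.Icc 1 n)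
  row_inc : ∀ l r c, (l, r, c + 1) ∈ shape.diagram → entry (l, r, c) < entry (l, r, c + 1)
  col_inc : ∀ l r c, (l, r + 1, c) ∈ shape.diagram → entry (l, r, c) < entry (l, r + 1, c)

/-- The node of a standard tableau containing the entry `k`. -/
noncomputable def StdTableau.node {ℓ n : ℕ} (T : StdTableau ℓ n) (k : ℕ) : Node :=
  Function.invFunOn T.entry T.shape.diagram k

/-- The content `c_k(T) = κ_l + c - r` of the entry `k` in the tableau `T`
(`1 ≤ k ≤ n`). -/
noncomputable def content {ℓ n : ℕ} (κ : ℕ → ℤ) (T : StdTableau ℓ n) (k : ℕ) : ℤ :=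
  κ (T.node k).1 + ((T.node k).2.2 : ℤ) - ((T.node k).2.1 : ℤ)

/-- The residue sequence of a standard tableau, in `I^n` with `I = ℤ/eℤ`. -/
noncomputable def resSeq {ℓ n : ℕ} (e : ℕ) (κ : ℕ → ℤ) (T : StdTableau ℓ n) :
    Fin n → ZMod e :=
  fun k => ((content κ T (k.1 + 1) : ℤ) : ZMod e)

/-- The residue of a node. -/
def resNode (e : ℕ) (κ : ℕ → ℤ) (A : Node) : ZMod e :=
  ((κ A.1 + (A.2.2 : ℤ) - (A.2.1 : ℤ) : ℤ) : ZMod e)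

/-- A set of nodes is the diagram of a multipartition (with at most `ℓ` components)
iff it is finite and downward closed in rows and columns. -/
def IsDiagramSet (ℓ : ℕ) (S : Set Node) : Prop :=
  S.Finite ∧ (∀ A ∈ S, A.1 < ℓ) ∧
    (∀ l r c, (l, r, c + 1) ∈ S → (l, r, c) ∈ S) ∧
    (∀ l r c, (l, r + 1, c) ∈ S → (l, r, c) ∈ S)

/-- `A` is an addable node of the diagram `S`. -/
def Addable (ℓ : ℕ) (S : Set Node) (A : Node) : Prop :=
  A ∉ S ∧ IsDiagramSet ℓ (S ∪ {A})

/-- `A` is a removable node of the diagram `S`. -/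
def Removable (ℓ : ℕ) (S : Set Node) (A : Node) : Prop :=
  A ∈ S ∧ IsDiagramSet ℓ (S \ {A})

/-- `d_A(S)`: the number of addable nodes of `S` of the same residue as `A` strictly
below `A`, minus the number of removable ones. -/
noncomputable def dNode (ℓ e : ℕ) (κ : ℕ → ℤ) (S : Set Node) (A : Node) : ℤ :=
  (Set.ncard {B | Addable ℓ S B ∧ resNode e κ B = resNode e κ A ∧ nodeBelow A B} : ℤ) -
    (Set.ncard {B | Removable ℓ S B ∧ resNode e κ B = resNode e κ A ∧ nodeBelow A B} : ℤ)

/-- The Brundan–Kleshchev–Wang degree `deg_e(T)` of a standard tableau, written as the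
telescoping sum of the recursion `deg_e(T) = deg_e(T↓(n-1)) + d_A(Shape(T))`. -/
noncomputable def degE {ℓ n : ℕ} (e : ℕ) (κ : ℕ → ℤ) (T : StdTableau ℓ n) : ℤ :=
  ∑ m ∈ Finset.Icc 1 n,
    dNode ℓ e κ {A | A ∈ T.shape.diagram ∧ T.entry A ≤ m} (T.node m)

/-- The restriction of the diagram of `T` to entries `≤ m` (the diagram of `Shape(T↓m)`). -/
def restDiag {ℓ n : ℕ} (T : StdTableau ℓ n) (m : ℕ) : Set Node :=
  {A | A ∈ T.shape.diagram ∧ T.entry A ≤ m}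

/-- Dominance order on standard tableaux: `domTab S T` iff `S ⊵ T`. -/
def domTab {ℓ n : ℕ} (S T : StdTableau ℓ n) : Prop :=
  ∀ m l i : ℕ,
    Set.ncard {A | A ∈ restDiag T m ∧ (A.1 < l ∨ (A.1 = l ∧ A.2.1 ≤ i))} ≤
      Set.ncard {A | A ∈ restDiag S m ∧ (A.1 < l ∨ (A.1 = l ∧ A.2.1 ≤ i))}

/-- Interchange the entries `r` and `r + 1` in an entry function. -/
def swapEntry (f : Node → ℕ) (r : ℕ) : Node → ℕ :=
  fun A => if f A = r then r + 1 else if f A = r + 1 then r else f A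

/-- `ρ_r(T) = c_r(T) - c_{r+1}(T)`, the axial distance. -/
noncomputable def rhoTab {ℓ n : ℕ} (κ : ℕ → ℤ) (T : StdTableau ℓ n) (r : ℕ) : ℤ :=
  content κ T r - content κ T (r + 1)

/-- The entry function of the row-reading initial tableau `t^λ`. -/
noncomputable def tlamEntry {ℓ n : ℕ} (μ : Multipartition ℓ n) (A : Node) : ℕ :=
  if A ∈ μ.diagram then
    (∑ l ∈ Finset.range A.1, ∑ r ∈ Finset.range n, μ.part l r) +
      (∑ r ∈ Finset.range A.2.1, μ.part A.1 r) + A.2.2 + 1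
  else 0

/-- The finite set of possible contents of standard tableaux of size `n`. -/
noncomputable def contFinset (ℓ n : ℕ) (κ : ℕ → ℤ) : Finset ℤ :=
  ((Finset.range ℓ ×ˢ Finset.range n ×ˢ Finset.range n).image
      (fun x => κ x.1 + (x.2.2 : ℤ) - (x.2.1 : ℤ))).filter
    (fun c => ∃ T : StdTableau ℓ n, ∃ k, 1 ≤ k ∧ k ≤ n ∧ content κ T k = c)

/-- The standard tableau (if any) obtained from `T` by interchanging the entries
`r` and `r + 1`; i.e. `T·s_r` if it is standard, and `none` otherwise. -/
noncomputable def oSwapO {ℓ n : ℕ} (T : StdTableau ℓ n) (r : ℕ) :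
    Option (StdTableau ℓ n) :=
  if h : ∃ V : StdTableau ℓ n, V.entry = swapEntry T.entry r then some (Classical.choose h)
  else none

/-- `oSwap` extended to `Option`. -/
noncomputable def oSwap {ℓ n : ℕ} (X : Option (StdTableau ℓ n)) (r : ℕ) :
    Option (StdTableau ℓ n) :=
  X.bind fun T => oSwapO T r

/-- Evaluate a seminormal coefficient system on an optional tableau (by `0` if none). -/
noncomputable def aE {ℓ n : ℕ} {K : Type*} [Field K] (α : ℕ → StdTableau ℓ n → K) (r : ℕ)
    (X : Option (StdTableau ℓ n)) : K :=
  X.elim 0 (α r)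

/-! ## Separation and idempotent subrings -/

/-- `(K, t)` separates `Std(P_n)` (field version):
`[n]!_t ∏_{1 ≤ l < m ≤ ℓ} ∏_{-n < d < n} [κ_l - κ_m + d]_t ≠ 0`. -/
def SeparatesF {K : Type*} [Field K] (t : Kˣ) (n ℓ : ℕ) (κ : ℕ → ℤ) : Prop :=
  ((∏ d ∈ Finset.Icc 1 n, qint (t : K) (d : ℤ)) *
      ∏ l ∈ Finset.range ℓ, ∏ m ∈ Finset.Ioo l ℓ,
        ∏ d ∈ Finset.Ioo (-(n : ℤ)) (n : ℤ), qint (t : K) (κ l - κ m + d)) ≠ 0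

/-- `(O, t)` separates `Std(P_n)` (subring version): the separation element is a unit. -/
def SeparatesU {O : Type*} [CommRing O] (t : Oˣ) (n ℓ : ℕ) (κ : ℕ → ℤ) : Prop :=
  IsUnit ((∏ d ∈ Finset.Icc 1 n, qintU t (d : ℤ)) *
      ∏ l ∈ Finset.range ℓ, ∏ m ∈ Finset.Ioo l ℓ,
        ∏ d ∈ Finset.Ioo (-(n : ℤ)) (n : ℤ), qintU t (κ l - κ m + d))

/-- `(O, t)` is an `e`-idempotent subring of the field `K`. -/
def IsIdempotentSubring {K : Type*} [Field K] (O : Subring K) (t : Oˣ) (e n ℓ : ℕ)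
    (κ : ℕ → ℤ) : Prop :=
  SeparatesU t n ℓ κ ∧
    (∀ k : ℤ, ¬(e : ℤ) ∣ k → IsUnit (qintU t k)) ∧
    (∀ k : ℤ, (e : ℤ) ∣ k → qintU t k ∈ Ideal.jacobson (⊥ : Ideal O))

/-! ## The cyclotomic Hecke algebra, by generators and relations -/

/-- Generators `L_1, …, L_n`, `T_1, …, T_{n-1}` (here `0`-based). -/
inductive HeckeGen (n : ℕ) : Type
  | L : Fin n → HeckeGen n
  | T : Fin (n - 1) → HeckeGen n

/-- The position `r` of the pair `(r, r+1)` interchanged by the `r`-th transposition. -/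
def pL {n : ℕ} (r : Fin (n - 1)) : Fin n := ⟨r.1, by have := r.2; omega⟩

/-- The position `r + 1` of the pair interchanged by the `r`-th transposition. -/
def pR {n : ℕ} (r : Fin (n - 1)) : Fin n := ⟨r.1 + 1, by have := r.2; omega⟩

/-- The position `r + 2`, used in braid relations. -/
def pM {n : ℕ} (r : Fin (n - 1)) (hr : r.1 + 1 < n - 1) : Fin n := ⟨r.1 + 2, by omega⟩

/-- The free algebra generator `L_k`. -/
def hL (R : Type*) [CommRing R] {n : ℕ} (k : Fin n) : FreeAlgebra R (HeckeGen n) :=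
  FreeAlgebra.ι R (HeckeGen.L k)

/-- The free algebra generator `T_r`. -/
def hT (R : Type*) [CommRing R] {n : ℕ} (r : Fin (n - 1)) : FreeAlgebra R (HeckeGen n) :=
  FreeAlgebra.ι R (HeckeGen.T r)

/-- The defining relations of the integral cyclotomic Hecke algebra `H_n(R, t, κ)`. -/
inductive HeckeRel (R : Type*) [CommRing R] (t : Rˣ) (n ℓ : ℕ) (κ : ℕ → ℤ) :
    FreeAlgebra R (HeckeGen n) → FreeAlgebra R (HeckeGen n) → Prop
  | cyc (h : 0 < n) :
      HeckeRel R t n ℓ κ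
        (((List.range ℓ).map fun l =>
          hL R (⟨0, h⟩ : Fin n) - algebraMap R _ (qintU t (κ l))).prod) 0
  | quad (r : Fin (n - 1)) :
      HeckeRel R t n ℓ κ ((hT R r + 1) * (hT R r - algebraMap R _ (t : R))) 0
  | LL (k m : Fin n) : HeckeRel R t n ℓ κ (hL R k * hL R m) (hL R m * hL R k)
  | TTfar (r s : Fin (n - 1)) (h : r.1 + 1 < s.1 ∨ s.1 + 1 < r.1) :
      HeckeRel R t n ℓ κ (hT R r * hT R s) (hT R s * hT R r)
  | braid (r s : Fin (n - 1)) (h : s.1 = r.1 + 1) :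
      HeckeRel R t n ℓ κ (hT R r * hT R s * hT R r) (hT R s * hT R r * hT R s)
  | TL (r : Fin (n - 1)) (k : Fin n) (h : k.1 ≠ r.1 ∧ k.1 ≠ r.1 + 1) :
      HeckeRel R t n ℓ κ (hT R r * hL R k) (hL R k * hT R r)
  | LT (r : Fin (n - 1)) :
      HeckeRel R t n ℓ κ (hL R (pR r) * (hT R r - algebraMap R _ (t : R) + 1))
        (hT R r * hL R (pL r) + 1)

/-- The integral cyclotomic Hecke algebra of type `A`, `H_n(R, t, κ)`. -/
noncomputable abbrev CycHecke (R : Type*) [CommRing R] (t : Rˣ) (n ℓ : ℕ) (κ : ℕ → ℤ) :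
    Type _ :=
  RingQuot (HeckeRel R t n ℓ κ)

/-- The generator `L_k` of the cyclotomic Hecke algebra. -/
noncomputable def Lgen (R : Type*) [CommRing R] (t : Rˣ) (n ℓ : ℕ) (κ : ℕ → ℤ)
    (k : Fin n) : CycHecke R t n ℓ κ :=
  RingQuot.mkAlgHom R (HeckeRel R t n ℓ κ) (hL R k)

/-- The generator `T_r` of the cyclotomic Hecke algebra. -/
noncomputable def Tgen (R : Type*) [CommRing R] (t : Rˣ) (n ℓ : ℕ) (κ : ℕ → ℤ)
    (r : Fin (n - 1)) : CycHecke R t n ℓ κ :=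
  RingQuot.mkAlgHom R (HeckeRel R t n ℓ κ) (hT R r)

end Paper
/-! ## Quiver Hecke (KLR) algebras, by generators and relations -/

namespace Paper

/-- Generators `e(i)` (`i ∈ I^n`), `ψ_1, …, ψ_{n-1}`, `y_1, …, y_n` (here `0`-based). -/
inductive KLRGen (n e : ℕ) : Type
  | idem : (Fin n → ZMod e) → KLRGen n e
  | psi : Fin (n - 1) → KLRGen n e
  | y : Fin n → KLRGen n e

/-- The free algebra generator `e(i)`. -/
def kE (R : Type*) [CommRing R] {n e : ℕ} (i : Fin n → ZMod e) :
    FreeAlgebra R (KLRGen n e) :=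
  FreeAlgebra.ι R (KLRGen.idem i)

/-- The free algebra generator `ψ_r`. -/
def kPsi (R : Type*) [CommRing R] {n e : ℕ} (r : Fin (n - 1)) :
    FreeAlgebra R (KLRGen n e) :=
  FreeAlgebra.ι R (KLRGen.psi r)

/-- The free algebra generator `y_k`. -/
def kY (R : Type*) [CommRing R] {n e : ℕ} (k : Fin n) : FreeAlgebra R (KLRGen n e) :=
  FreeAlgebra.ι R (KLRGen.y k)

/-- `s_r · i`: interchange the entries of `i` at positions `r` and `r + 1`. -/
def swapSeq {n e : ℕ} (i : Fin n → ZMod e) (r : Fin (n - 1)) : Fin n → ZMod e :=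
  fun k => if k = pL r then i (pR r) else if k = pR r then i (pL r) else i k

/-- The defining relations of the cyclotomic quiver Hecke algebra `R_n^Λ(R)` where
`Λ = Σ_l Λ_{κ_l mod e}`. -/
inductive KLRRel (R : Type*) [CommRing R] (n e ℓ : ℕ) [NeZero e] (κ : ℕ → ℤ) :
    FreeAlgebra R (KLRGen n e) → FreeAlgebra R (KLRGen n e) → Prop
  | cyc (h : 0 < n) (i : Fin n → ZMod e) :
      KLRRel R n e ℓ κ
        ((kY R (⟨0, h⟩ : Fin n)) ^
            (((Finset.range ℓ).filter fun l => ((κ l : ZMod e) = i ⟨0, h⟩)).card) *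
          kE R i) 0
  | orth (i j : Fin n → ZMod e) (h : i ≠ j) : KLRRel R n e ℓ κ (kE R i * kE R j) 0
  | idem (i : Fin n → ZMod e) : KLRRel R n e ℓ κ (kE R i * kE R i) (kE R i)
  | complete : KLRRel R n e ℓ κ (∑ i : Fin n → ZMod e, kE R i) 1
  | yE (k : Fin n) (i : Fin n → ZMod e) :
      KLRRel R n e ℓ κ (kY R k * kE R i) (kE R i * kY R k)
  | psiE (r : Fin (n - 1)) (i : Fin n → ZMod e) :
      KLRRel R n e ℓ κ (kPsi R r * kE R i) (kE R (swapSeq i r) * kPsi R r)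
  | yy (k m : Fin n) : KLRRel R n e ℓ κ (kY R k * kY R m) (kY R m * kY R k)
  | psiyEq (r : Fin (n - 1)) (i : Fin n → ZMod e) (h : i (pL r) = i (pR r)) :
      KLRRel R n e ℓ κ (kPsi R r * kY R (pR r) * kE R i)
        ((kY R (pL r) * kPsi R r + 1) * kE R i)
  | psiyNe (r : Fin (n - 1)) (i : Fin n → ZMod e) (h : i (pL r) ≠ i (pR r)) :
      KLRRel R n e ℓ κ (kPsi R r * kY R (pR r) * kE R i)
        (kY R (pL r) * kPsi R r * kE R i)
  | ypsiEq (r : Fin (n - 1)) (i : Fin n → ZMod e) (h : i (pL r) = i (pR r)) :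
      KLRRel R n e ℓ κ (kY R (pR r) * kPsi R r * kE R i)
        ((kPsi R r * kY R (pL r) + 1) * kE R i)
  | ypsiNe (r : Fin (n - 1)) (i : Fin n → ZMod e) (h : i (pL r) ≠ i (pR r)) :
      KLRRel R n e ℓ κ (kY R (pR r) * kPsi R r * kE R i)
        (kPsi R r * kY R (pL r) * kE R i)
  | psiyFar (r : Fin (n - 1)) (k : Fin n) (h : k.1 ≠ r.1 ∧ k.1 ≠ r.1 + 1) :
      KLRRel R n e ℓ κ (kPsi R r * kY R k) (kY R k * kPsi R r)
  | psipsiFar (r s : Fin (n - 1)) (h : r.1 + 1 < s.1 ∨ s.1 + 1 < r.1) :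
      KLRRel R n e ℓ κ (kPsi R r * kPsi R s) (kPsi R s * kPsi R r)
  | quadEq (r : Fin (n - 1)) (i : Fin n → ZMod e) (h : i (pL r) = i (pR r)) :
      KLRRel R n e ℓ κ (kPsi R r ^ 2 * kE R i) 0
  | quadR (r : Fin (n - 1)) (i : Fin n → ZMod e)
      (h1 : i (pR r) = i (pL r) + 1) (h2 : i (pL r) ≠ i (pR r) + 1) :
      KLRRel R n e ℓ κ (kPsi R r ^ 2 * kE R i) ((kY R (pL r) - kY R (pR r)) * kE R i)
  | quadL (r : Fin (n - 1)) (i : Fin n → ZMod e)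
      (h1 : i (pL r) = i (pR r) + 1) (h2 : i (pR r) ≠ i (pL r) + 1) :
      KLRRel R n e ℓ κ (kPsi R r ^ 2 * kE R i) ((kY R (pR r) - kY R (pL r)) * kE R i)
  | quadBoth (r : Fin (n - 1)) (i : Fin n → ZMod e)
      (h1 : i (pR r) = i (pL r) + 1) (h2 : i (pL r) = i (pR r) + 1) :
      KLRRel R n e ℓ κ (kPsi R r ^ 2 * kE R i)
        ((kY R (pR r) - kY R (pL r)) * (kY R (pL r) - kY R (pR r)) * kE R i)
  | quadNone (r : Fin (n - 1)) (i : Fin n → ZMod e) (h1 : i (pL r) ≠ i (pR r))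
      (h2 : i (pR r) ≠ i (pL r) + 1) (h3 : i (pL r) ≠ i (pR r) + 1) :
      KLRRel R n e ℓ κ (kPsi R r ^ 2 * kE R i) (kE R i)
  | braidR (r : Fin (n - 1)) (hr : r.1 + 1 < n - 1) (i : Fin n → ZMod e)
      (h0 : i (pM r hr) = i (pL r)) (h1 : i (pR r) = i (pL r) + 1)
      (h2 : i (pL r) ≠ i (pR r) + 1) :
      KLRRel R n e ℓ κ (kPsi R r * kPsi R ⟨r.1 + 1, hr⟩ * kPsi R r * kE R i)
        ((kPsi R ⟨r.1 + 1, hr⟩ * kPsi R r * kPsi R ⟨r.1 + 1, hr⟩ - 1) * kE R i)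
  | braidL (r : Fin (n - 1)) (hr : r.1 + 1 < n - 1) (i : Fin n → ZMod e)
      (h0 : i (pM r hr) = i (pL r)) (h1 : i (pL r) = i (pR r) + 1)
      (h2 : i (pR r) ≠ i (pL r) + 1) :
      KLRRel R n e ℓ κ (kPsi R r * kPsi R ⟨r.1 + 1, hr⟩ * kPsi R r * kE R i)
        ((kPsi R ⟨r.1 + 1, hr⟩ * kPsi R r * kPsi R ⟨r.1 + 1, hr⟩ + 1) * kE R i)
  | braidBoth (r : Fin (n - 1)) (hr : r.1 + 1 < n - 1) (i : Fin n → ZMod e)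
      (h0 : i (pM r hr) = i (pL r)) (h1 : i (pR r) = i (pL r) + 1)
      (h2 : i (pL r) = i (pR r) + 1) :
      KLRRel R n e ℓ κ (kPsi R r * kPsi R ⟨r.1 + 1, hr⟩ * kPsi R r * kE R i)
        ((kPsi R ⟨r.1 + 1, hr⟩ * kPsi R r * kPsi R ⟨r.1 + 1, hr⟩ +
            kY R (pL r) - 2 * kY R (pR r) + kY R (pM r hr)) * kE R i)
  | braidNone (r : Fin (n - 1)) (hr : r.1 + 1 < n - 1) (i : Fin n → ZMod e)
      (h : ¬(i (pM r hr) = i (pL r) ∧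
        (i (pR r) = i (pL r) + 1 ∨ i (pL r) = i (pR r) + 1))) :
      KLRRel R n e ℓ κ (kPsi R r * kPsi R ⟨r.1 + 1, hr⟩ * kPsi R r * kE R i)
        (kPsi R ⟨r.1 + 1, hr⟩ * kPsi R r * kPsi R ⟨r.1 + 1, hr⟩ * kE R i)

/-- The cyclotomic quiver Hecke algebra `R_n^Λ(R)`, `Λ = Σ_l Λ_{κ_l mod e}`. -/
noncomputable abbrev KLR (R : Type*) [CommRing R] (n e ℓ : ℕ) [NeZero e] (κ : ℕ → ℤ) :
    Type _ :=
  RingQuot (KLRRel R n e ℓ κ)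

/-- The generator `e(i)` of the cyclotomic quiver Hecke algebra. -/
noncomputable def KeGen (R : Type*) [CommRing R] (n e ℓ : ℕ) [NeZero e] (κ : ℕ → ℤ)
    (i : Fin n → ZMod e) : KLR R n e ℓ κ :=
  RingQuot.mkAlgHom R (KLRRel R n e ℓ κ) (kE R i)

/-- The generator `ψ_r` of the cyclotomic quiver Hecke algebra. -/
noncomputable def KpsiGen (R : Type*) [CommRing R] (n e ℓ : ℕ) [NeZero e] (κ : ℕ → ℤ)
    (r : Fin (n - 1)) : KLR R n e ℓ κ :=
  RingQuot.mkAlgHom R (KLRRel R n e ℓ κ) (kPsi R r)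

/-- The generator `y_k` of the cyclotomic quiver Hecke algebra. -/
noncomputable def KyGen (R : Type*) [CommRing R] (n e ℓ : ℕ) [NeZero e] (κ : ℕ → ℤ)
    (k : Fin n) : KLR R n e ℓ κ :=
  RingQuot.mkAlgHom R (KLRRel R n e ℓ κ) (kY R k)

end Paper
/-! ## The deformed cyclotomic quiver Hecke algebra -/

namespace Paper

/-- `y_k^⟨d⟩ = t^d y_k + [d]_t` in the free algebra. -/
def ydot (R : Type*) [CommRing R] (t : Rˣ) {n e : ℕ} (d : ℤ) (k : Fin n) :
    FreeAlgebra R (KLRGen n e) :=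
  algebraMap R _ ((t ^ d : Rˣ) : R) * kY R k + algebraMap R _ (qintU t d)

/-- `ρ_r(i) = î_r - î_{r+1}` for `i ∈ I^n`. -/
def rhoI {n e : ℕ} (i : Fin n → ZMod e) (r : Fin (n - 1)) : ℤ :=
  ((i (pL r)).val : ℤ) - ((i (pR r)).val : ℤ)

/-- The defining relations of the deformed cyclotomic quiver Hecke algebra `R_n(O)`. -/
inductive DefKLRRel (R : Type*) [CommRing R] (t : Rˣ) (n e ℓ : ℕ) [NeZero e] (κ : ℕ → ℤ) :
    FreeAlgebra R (KLRGen n e) → FreeAlgebra R (KLRGen n e) → Prop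
  | cyc (h : 0 < n) (i : Fin n → ZMod e) :
      DefKLRRel R t n e ℓ κ
        ((((List.range ℓ).map fun l =>
            if ((κ l : ZMod e) = i ⟨0, h⟩) then
              kY R (⟨0, h⟩ : Fin n) -
                algebraMap R _ (qintU t (κ l - ((i ⟨0, h⟩).val : ℤ)))
            else 1).prod) * kE R i) 0
  | orth (i j : Fin n → ZMod e) (h : i ≠ j) : DefKLRRel R t n e ℓ κ (kE R i * kE R j) 0
  | idem (i : Fin n → ZMod e) : DefKLRRel R t n e ℓ κ (kE R i * kE R i) (kE R i)
  | complete : DefKLRRel R t n e ℓ κ (∑ i : Fin n → ZMod e, kE R i) 1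
  | yE (k : Fin n) (i : Fin n → ZMod e) :
      DefKLRRel R t n e ℓ κ (kY R k * kE R i) (kE R i * kY R k)
  | psiE (r : Fin (n - 1)) (i : Fin n → ZMod e) :
      DefKLRRel R t n e ℓ κ (kPsi R r * kE R i) (kE R (swapSeq i r) * kPsi R r)
  | yy (k m : Fin n) : DefKLRRel R t n e ℓ κ (kY R k * kY R m) (kY R m * kY R k)
  | psiyEq (r : Fin (n - 1)) (i : Fin n → ZMod e) (h : i (pL r) = i (pR r)) :
      DefKLRRel R t n e ℓ κ (kPsi R r * kY R (pR r) * kE R i)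
        ((kY R (pL r) * kPsi R r + 1) * kE R i)
  | psiyNe (r : Fin (n - 1)) (i : Fin n → ZMod e) (h : i (pL r) ≠ i (pR r)) :
      DefKLRRel R t n e ℓ κ (kPsi R r * kY R (pR r) * kE R i)
        (kY R (pL r) * kPsi R r * kE R i)
  | ypsiEq (r : Fin (n - 1)) (i : Fin n → ZMod e) (h : i (pL r) = i (pR r)) :
      DefKLRRel R t n e ℓ κ (kY R (pR r) * kPsi R r * kE R i)
        ((kPsi R r * kY R (pL r) + 1) * kE R i)
  | ypsiNe (r : Fin (n - 1)) (i : Fin n → ZMod e) (h : i (pL r) ≠ i (pR r)) :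
      DefKLRRel R t n e ℓ κ (kY R (pR r) * kPsi R r * kE R i)
        (kPsi R r * kY R (pL r) * kE R i)
  | psiyFar (r : Fin (n - 1)) (k : Fin n) (h : k.1 ≠ r.1 ∧ k.1 ≠ r.1 + 1) :
      DefKLRRel R t n e ℓ κ (kPsi R r * kY R k) (kY R k * kPsi R r)
  | psipsiFar (r s : Fin (n - 1)) (h : r.1 + 1 < s.1 ∨ s.1 + 1 < r.1) :
      DefKLRRel R t n e ℓ κ (kPsi R r * kPsi R s) (kPsi R s * kPsi R r)
  | quadEq (r : Fin (n - 1)) (i : Fin n → ZMod e) (h : i (pL r) = i (pR r)) :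
      DefKLRRel R t n e ℓ κ (kPsi R r ^ 2 * kE R i) 0
  | quadR (r : Fin (n - 1)) (i : Fin n → ZMod e)
      (h1 : i (pR r) = i (pL r) + 1) (h2 : i (pL r) ≠ i (pR r) + 1) :
      DefKLRRel R t n e ℓ κ (kPsi R r ^ 2 * kE R i)
        ((ydot R t (1 + rhoI i r) (pL r) - kY R (pR r)) * kE R i)
  | quadL (r : Fin (n - 1)) (i : Fin n → ZMod e)
      (h1 : i (pL r) = i (pR r) + 1) (h2 : i (pR r) ≠ i (pL r) + 1) :
      DefKLRRel R t n e ℓ κ (kPsi R r ^ 2 * kE R i)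
        ((ydot R t (1 - rhoI i r) (pR r) - kY R (pL r)) * kE R i)
  | quadBoth (r : Fin (n - 1)) (i : Fin n → ZMod e)
      (h1 : i (pR r) = i (pL r) + 1) (h2 : i (pL r) = i (pR r) + 1) :
      DefKLRRel R t n e ℓ κ (kPsi R r ^ 2 * kE R i)
        ((ydot R t (1 + rhoI i r) (pL r) - kY R (pR r)) *
          (ydot R t (1 - rhoI i r) (pR r) - kY R (pL r)) * kE R i)
  | quadNone (r : Fin (n - 1)) (i : Fin n → ZMod e) (h1 : i (pL r) ≠ i (pR r))
      (h2 : i (pR r) ≠ i (pL r) + 1) (h3 : i (pL r) ≠ i (pR r) + 1) :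
      DefKLRRel R t n e ℓ κ (kPsi R r ^ 2 * kE R i) (kE R i)
  | braidBoth (r : Fin (n - 1)) (hr : r.1 + 1 < n - 1) (i : Fin n → ZMod e)
      (h0 : i (pM r hr) = i (pL r)) (h1 : i (pR r) = i (pL r) + 1)
      (h2 : i (pL r) = i (pR r) + 1) :
      DefKLRRel R t n e ℓ κ
        ((kPsi R r * kPsi R ⟨r.1 + 1, hr⟩ * kPsi R r -
            kPsi R ⟨r.1 + 1, hr⟩ * kPsi R r * kPsi R ⟨r.1 + 1, hr⟩) * kE R i)
        ((ydot R t (1 + rhoI i r) (pL r) + ydot R t (1 + rhoI i r) (pM r hr) -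
            ydot R t (1 + rhoI i r) (pR r) - ydot R t (1 - rhoI i r) (pR r)) * kE R i)
  | braidR (r : Fin (n - 1)) (hr : r.1 + 1 < n - 1) (i : Fin n → ZMod e)
      (h0 : i (pM r hr) = i (pL r)) (h1 : i (pR r) = i (pL r) + 1)
      (h2 : i (pL r) ≠ i (pR r) + 1) :
      DefKLRRel R t n e ℓ κ
        ((kPsi R r * kPsi R ⟨r.1 + 1, hr⟩ * kPsi R r -
            kPsi R ⟨r.1 + 1, hr⟩ * kPsi R r * kPsi R ⟨r.1 + 1, hr⟩) * kE R i)
        (algebraMap R _ (-(((t ^ (1 + rhoI i r) : Rˣ) : R))) * kE R i)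
  | braidL (r : Fin (n - 1)) (hr : r.1 + 1 < n - 1) (i : Fin n → ZMod e)
      (h0 : i (pM r hr) = i (pL r)) (h1 : i (pL r) = i (pR r) + 1)
      (h2 : i (pR r) ≠ i (pL r) + 1) :
      DefKLRRel R t n e ℓ κ
        ((kPsi R r * kPsi R ⟨r.1 + 1, hr⟩ * kPsi R r -
            kPsi R ⟨r.1 + 1, hr⟩ * kPsi R r * kPsi R ⟨r.1 + 1, hr⟩) * kE R i)
        (kE R i)
  | braidNone (r : Fin (n - 1)) (hr : r.1 + 1 < n - 1) (i : Fin n → ZMod e)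
      (h : ¬(i (pM r hr) = i (pL r) ∧
        (i (pR r) = i (pL r) + 1 ∨ i (pL r) = i (pR r) + 1))) :
      DefKLRRel R t n e ℓ κ
        ((kPsi R r * kPsi R ⟨r.1 + 1, hr⟩ * kPsi R r -
            kPsi R ⟨r.1 + 1, hr⟩ * kPsi R r * kPsi R ⟨r.1 + 1, hr⟩) * kE R i) 0

/-- The deformed cyclotomic quiver Hecke algebra `R_n(R)`. -/
noncomputable abbrev DefKLR (R : Type*) [CommRing R] (t : Rˣ) (n e ℓ : ℕ) [NeZero e]
    (κ : ℕ → ℤ) : Type _ :=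
  RingQuot (DefKLRRel R t n e ℓ κ)

/-- The generator `f_i` of the deformed cyclotomic quiver Hecke algebra. -/
noncomputable def DfGen (R : Type*) [CommRing R] (t : Rˣ) (n e ℓ : ℕ) [NeZero e]
    (κ : ℕ → ℤ) (i : Fin n → ZMod e) : DefKLR R t n e ℓ κ :=
  RingQuot.mkAlgHom R (DefKLRRel R t n e ℓ κ) (kE R i)

/-- The generator `ψ_r` of the deformed cyclotomic quiver Hecke algebra. -/
noncomputable def DpsiGen (R : Type*) [CommRing R] (t : Rˣ) (n e ℓ : ℕ) [NeZero e]
    (κ : ℕ → ℤ) (r : Fin (n - 1)) : DefKLR R t n e ℓ κ :=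
  RingQuot.mkAlgHom R (DefKLRRel R t n e ℓ κ) (kPsi R r)

/-- The generator `y_k` of the deformed cyclotomic quiver Hecke algebra. -/
noncomputable def DyGen (R : Type*) [CommRing R] (t : Rˣ) (n e ℓ : ℕ) [NeZero e]
    (κ : ℕ → ℤ) (k : Fin n) : DefKLR R t n e ℓ κ :=
  RingQuot.mkAlgHom R (DefKLRRel R t n e ℓ κ) (kY R k)

/-! ## Seminormal idempotents -/

/-- The seminormal idempotent `F_T` of the semisimple cyclotomic Hecke algebra:
`F_T = ∏_{k=1}^n ∏_{c ∈ Cont(n), [c_k(T)] ≠ [c]} (L_k - [c]) / ([c_k(T)] - [c])`. -/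
noncomputable def Fidem (K : Type*) [Field K] (tK : Kˣ) (n ℓ : ℕ) (κ : ℕ → ℤ)
    (T : StdTableau ℓ n) : CycHecke K tK n ℓ κ :=
  ((List.finRange n).map (fun k =>
    (((contFinset ℓ n κ).sort (· ≤ ·)).map (fun c =>
      if qint (tK : K) (content κ T (k.1 + 1)) ≠ qint (tK : K) c then
        (Lgen K tK n ℓ κ k - algebraMap K _ (qint (tK : K) c)) *
          algebraMap K _ ((qint (tK : K) (content κ T (k.1 + 1)) - qint (tK : K) c)⁻¹)
      else 1)).prod)).prod

/-- The residue idempotent `f_i = Σ_{T ∈ Std(i)} F_T`. -/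
noncomputable def fres (K : Type*) [Field K] (tK : Kˣ) (n ℓ e : ℕ) (κ : ℕ → ℤ)
    (i : Fin n → ZMod e) : CycHecke K tK n ℓ κ :=
  ∑ᶠ T : {T : StdTableau ℓ n // resSeq e κ T = i}, Fidem K tK n ℓ κ T.1

/-- The simultaneous two-sided eigenspace `H_{S,T}` of the Jucys–Murphy elements. -/
noncomputable def eigSub (K : Type*) [Field K] (tK : Kˣ) (n ℓ : ℕ) (κ : ℕ → ℤ)
    (S T : StdTableau ℓ n) : Submodule K (CycHecke K tK n ℓ κ) where
  carrier := {h | ∀ k : Fin n,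
      Lgen K tK n ℓ κ k * h = qint (tK : K) (content κ S (k.1 + 1)) • h ∧
      h * Lgen K tK n ℓ κ k = qint (tK : K) (content κ T (k.1 + 1)) • h}
  add_mem' := by
    intro a b ha hb
    intro k
    obtain ⟨h1, h2⟩ := ha k
    obtain ⟨h3, h4⟩ := hb k
    exact ⟨by rw [mul_add, h1, h3, smul_add], by rw [add_mul, h2, h4, smul_add]⟩
  zero_mem' := by intro k; simp
  smul_mem' := by
    intro c a ha
    intro k
    obtain ⟨h1, h2⟩ := ha k
    constructor
    · rw [mul_smul_comm, h1, smul_comm]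
    · rw [smul_mul_assoc, h2, smul_comm]

end Paper

/-!
If `t ≠ 1`, then `H_n(K, t, κ)` is generated by the commuting elements `x_k = 1 + (t - 1) L_k` and
by the elements `D_r = T_r - t`, which behave like `c (s_r - 1)`, `c = (t x_r - x_{r+1}) / (x_r -
x_{r+1})`, in a skew group ring of the symmetric group. The joint eigenvalues of the `x_k` have the
form `t ^ w_1, …, t ^ w_n` for finitely many `w ∈ ℤ^n`, so that not only polynomials in the `x_k`
can be evaluated in `H_n(K, t, κ)`, but also elements of the product over all `w` of local rings of
affine `n`-space at the points `t ^ w`. Moving all these points to `(1, …, 1)` by rescaling the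
coordinates gives a ring independent of `t`, in which `x_k` is `t ^ w_k` times the `k`-th
coordinate in the component `w`.

Let `t'` be another parameter, with elements `x'_k` of this ring and quotients `c'`. The hypotheses
on the orders of `t` and `t'` imply that `x_i - x_j`, `t x_i - x_j` and `x_i - t ^ κ_l` fail to be
invertible in the same components as their counterparts for `t'`. Hence `θ = c' / c` is a unit, and
the `x'_k` together with the elements `θ D_r`, which behave like `c' (s_r - 1)`, satisfy the
relations of `H_n(K, t', κ)` in `H_n(K, t, κ)`. The braid relation holds because, for `D_1`, `D_2`
with coefficients `c_{12}`, `c_{23}`, the element `D_1 D_2 D_1 - t D_1` is `c_{12} c_{13} c_{23}`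
times the alternating sum of the permutations of three letters, so that it is multiplied by
`θ_{12} θ_{13} θ_{23}`, as is `D_2 D_1 D_2 - t D_2`.
-/

namespace Paper

open MvPolynomial IsLocalRing

/-! ### The local ring at `(1, …, 1)` -/

section LocalRing

variable (K : Type*) [Field K] {σ : Type*}

/-- The local ring of the affine space `K^σ` at the point `(1, …, 1)`. -/
abbrev LocalRingAtOne (K σ : Type*) [Field K] : Type _ :=
  Localization.AtPrime (vanishingIdeal K {(1 : σ → K)})

/-- The `i`-th coordinate function, as an element of the local ring at `(1, …, 1)`. -/
noncomputable def localCoord (i : σ) : LocalRingAtOne K σ :=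
  algebraMap (MvPolynomial σ K) _ (X i)

variable {K}

lemma isUnit_algebraMap_localRingAtOne {p : MvPolynomial σ K} (hp : eval 1 p ≠ 0) :
    IsUnit (algebraMap _ (LocalRingAtOne K σ) p) :=
  (IsLocalization.AtPrime.isUnit_to_map_iff _ (vanishingIdeal K {(1 : σ → K)}) p).2 <| by
    simpa [Ideal.primeCompl, mem_vanishingIdeal_singleton_iff] using hp

lemma algebraMap_smul_X_sub (a b : K) (i j : σ) :
    algebraMap _ (LocalRingAtOne K σ) (a • X i - b • X j : MvPolynomial σ K) =
      a • localCoord K i - b • localCoord K j := by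
  rw [map_sub]
  exact congrArg₂ _ (map_smul (Algebra.algHom K _ _) a _) (map_smul (Algebra.algHom K _ _) b _)

lemma isUnit_smul_localCoord_sub {a b : K} (hab : a ≠ b) (i j : σ) :
    IsUnit (a • localCoord K i - b • localCoord K j) := by
  rw [← algebraMap_smul_X_sub]
  exact isUnit_algebraMap_localRingAtOne (by simpa [sub_eq_zero, smul_eq_C_mul] using hab)

lemma isUnit_smul_localCoord_sub_algebraMap {a b : K} (hab : a ≠ b) (i : σ) :
    IsUnit (a • localCoord K i - algebraMap K (LocalRingAtOne K σ) b) := by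
  have h : Algebra.algHom K _ (LocalRingAtOne K σ) (a • X i - algebraMap K (MvPolynomial σ K) b) =
      a • localCoord K i - algebraMap K (LocalRingAtOne K σ) b := by
    rw [map_sub, map_smul, AlgHom.commutes]
    rfl
  rw [← h]
  exact isUnit_algebraMap_localRingAtOne (by simpa [sub_eq_zero, smul_eq_C_mul] using hab)

lemma smul_localCoord_sub_dvd {a b a' b' : K} (ha : a ≠ 0) (h : a = b → a' = b') (i j : σ) :
    a • localCoord K i - b • localCoord K j ∣ a' • localCoord K i - b' • localCoord K j := by
  by_cases hab : a = b
  · refine ⟨algebraMap K _ (a⁻¹ * a'), ?_⟩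
    rw [← hab, ← h hab, mul_comm, ← Algebra.smul_def, smul_sub, smul_smul, smul_smul,
      mul_right_comm, inv_mul_cancel₀ ha, one_mul]
  · exact (isUnit_smul_localCoord_sub hab i j).dvd

lemma smul_localCoord_sub_algebraMap_dvd {a b a' b' : K} (ha : a ≠ 0) (h : a = b → a' = b')
    (i : σ) : a • localCoord K i - algebraMap K (LocalRingAtOne K σ) b ∣
      a' • localCoord K i - algebraMap K (LocalRingAtOne K σ) b' := by
  by_cases hab : a = b
  · refine ⟨algebraMap K _ (a⁻¹ * a'), ?_⟩
    rw [← hab, ← h hab, mul_comm, ← Algebra.smul_def, Algebra.algebraMap_eq_smul_one,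
      Algebra.algebraMap_eq_smul_one, smul_sub, smul_smul, smul_smul,
      mul_right_comm, inv_mul_cancel₀ ha, one_mul]
  · exact (isUnit_smul_localCoord_sub_algebraMap hab i).dvd

lemma smul_localCoord_sub_ne_zero {a : K} (ha : a ≠ 0) (b : K) {i j : σ} (hij : i ≠ j) :
    a • localCoord K i - b • localCoord K j ≠ 0 := by
  rw [← algebraMap_smul_X_sub, map_ne_zero_iff _
    (IsLocalization.injective _ (vanishingIdeal K {(1 : σ → K)}).primeCompl_le_nonZeroDivisors)]
  intro h
  simpa [hij.symm, ha, smul_eq_C_mul] using congrArg (eval (Pi.single i 1)) h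

variable (K) in
/-- The permutation of the coordinates by `π`, as an automorphism of the local ring. -/
noncomputable def permuteLocal (π : Equiv.Perm σ) : LocalRingAtOne K σ ≃ₐ[K] LocalRingAtOne K σ :=
  IsLocalization.algEquivOfAlgEquiv (M := (vanishingIdeal K {(1 : σ → K)}).primeCompl)
    (T := (vanishingIdeal K {(1 : σ → K)}).primeCompl) _ _ (renameEquiv K π) <| by
    ext p
    constructor
    · rintro ⟨q, hq, rfl⟩
      simpa [Ideal.primeCompl, mem_vanishingIdeal_singleton_iff, eval_rename] using hq
    · intro hp
      refine ⟨rename π.symm p, ?_, by simp [rename_rename]⟩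
      simpa [Ideal.primeCompl, mem_vanishingIdeal_singleton_iff, aeval_rename] using hp

@[simp]
lemma permuteLocal_localCoord (π : Equiv.Perm σ) (i : σ) :
    permuteLocal K π (localCoord K i) = localCoord K (π i) := by
  rw [permuteLocal, localCoord, IsLocalization.algEquivOfAlgEquiv_eq]
  simp [localCoord]

lemma permuteLocal_mem_maximalIdeal_pow (π : Equiv.Perm σ) {N : ℕ} {f : LocalRingAtOne K σ}
    (hf : f ∈ maximalIdeal (LocalRingAtOne K σ) ^ N) :
    permuteLocal K π f ∈ maximalIdeal (LocalRingAtOne K σ) ^ N := by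
  have h := Ideal.mem_map_of_mem (permuteLocal K π : _ →+* LocalRingAtOne K σ) hf
  rw [Ideal.map_pow] at h
  exact Ideal.pow_right_mono (((local_hom_TFAE _).out 0 2).1
    (inferInstance : IsLocalHom (permuteLocal K π : _ →+* LocalRingAtOne K σ))) N h

lemma localCoord_sub_dvd_permuteLocal_swap_sub [DecidableEq σ] (i j : σ)
    (f : LocalRingAtOne K σ) :
    localCoord K i - localCoord K j ∣ permuteLocal K (Equiv.swap i j) f - f := by
  rw [← Ideal.mem_span_singleton, ← Ideal.Quotient.mk_eq_mk_iff_sub_mem]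
  set I := Ideal.span {localCoord K i - localCoord K j}
  have hij : Ideal.Quotient.mk I (localCoord K i) = Ideal.Quotient.mk I (localCoord K j) :=
    Ideal.Quotient.eq.2 (Ideal.mem_span_singleton_self _)
  suffices h : (Ideal.Quotient.mkₐ K I).comp (permuteLocal K (Equiv.swap i j)).toAlgHom =
      Ideal.Quotient.mkₐ K I from DFunLike.congr_fun h f
  refine IsLocalization.algHom_ext (vanishingIdeal K {(1 : σ → K)}).primeCompl
    (MvPolynomial.algHom_ext fun k => ?_)
  change Ideal.Quotient.mk I (permuteLocal K _ (localCoord K k)) =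
    Ideal.Quotient.mk I (localCoord K k)
  rw [permuteLocal_localCoord, Equiv.swap_apply_def]
  split_ifs with hi hj
  · rw [hi, hij]
  · rw [hj, hij]
  · rfl

lemma exists_mem_maximalIdeal_pow_mul_eq_permuteLocal_swap_sub [DecidableEq σ] (i j : σ)
    {N : ℕ} {f : LocalRingAtOne K σ} (hf : f ∈ maximalIdeal (LocalRingAtOne K σ) ^ N) :
    ∃ g ∈ maximalIdeal (LocalRingAtOne K σ) ^ (N - 1),
      (localCoord K i - localCoord K j) * g = permuteLocal K (Equiv.swap i j) f - f := by
  induction N generalizing f with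
  | zero =>
    obtain ⟨g, hg⟩ := localCoord_sub_dvd_permuteLocal_swap_sub i j f
    exact ⟨g, by simp, hg.symm⟩
  | succ N ih =>
    rw [pow_succ'] at hf
    rw [Nat.add_sub_cancel]
    induction hf using Submodule.mul_induction_on' with
    | mem_mul_mem a ha b hb =>
      obtain ⟨a', ha'⟩ := localCoord_sub_dvd_permuteLocal_swap_sub i j a
      obtain ⟨b', hb', hbb'⟩ := ih hb
      refine ⟨permuteLocal K (Equiv.swap i j) a * b' + a' * b,
        add_mem ?_ (Ideal.mul_mem_left _ _ hb), ?_⟩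
      · have ha1 := permuteLocal_mem_maximalIdeal_pow (N := 1) (Equiv.swap i j) (by simpa using ha)
        refine Ideal.pow_le_pow_right (by lia : N ≤ 1 + (N - 1)) ?_
        rw [pow_add]
        exact Ideal.mul_mem_mul ha1 hb'
      · rw [map_mul]
        linear_combination permuteLocal K (Equiv.swap i j) a * hbb' - b * ha'
    | add a _ b _ hab hbb =>
      obtain ⟨a', ha', haa'⟩ := hab
      obtain ⟨b', hb', hbb'⟩ := hbb
      exact ⟨a' + b', add_mem ha' hb', by rw [mul_add, haa', hbb', map_add]; ring⟩

lemma exists_sub_algebraMap_mem_maximalIdeal_pow (f : LocalRingAtOne K σ) (N : ℕ) :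
    ∃ p : MvPolynomial σ K, f - algebraMap _ _ p ∈ maximalIdeal (LocalRingAtOne K σ) ^ N := by
  obtain ⟨q, hq⟩ := (IsLocalization.AtPrime.equivQuotMaximalIdealPow
    (vanishingIdeal K {(1 : σ → K)}) (LocalRingAtOne K σ) N).surjective (Ideal.Quotient.mk _ f)
  obtain ⟨p, rfl⟩ := Ideal.Quotient.mk_surjective q
  exact ⟨p, Ideal.Quotient.eq.1 hq.symm⟩

end LocalRing

section Rescaling

variable {K σ : Type*} [Field K]

/-- The substitution `X i ↦ a i • X i`; on `K^σ` it moves the point `(1, …, 1)` to `a`. -/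
noncomputable def rescale (a : σ → Kˣ) : MvPolynomial σ K ≃ₐ[K] MvPolynomial σ K :=
  AlgEquiv.ofAlgHom (aeval fun i => (a i : K) • X i) (aeval fun i => (a i : K)⁻¹ • X i)
    (algHom_ext fun i => by simp) (algHom_ext fun i => by simp)

lemma rescale_X (a : σ → Kˣ) (i : σ) : rescale a (X i) = (a i : K) • X i := by
  simp [rescale]

lemma eval_one_rescale (a : σ → Kˣ) (p : MvPolynomial σ K) :
    eval 1 (rescale a p) = eval (fun i => (a i : K)) p := by
  suffices h : (aeval (1 : σ → K)).comp (rescale a).toAlgHom = aeval fun i => (a i : K) by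
    simpa [aeval_eq_eval] using DFunLike.congr_fun h p
  exact algHom_ext fun i => by simp [rescale_X]

lemma rescale_mem_vanishingIdeal_pow_iff (a : σ → Kˣ) (p : MvPolynomial σ K) (N : ℕ) :
    rescale a p ∈ vanishingIdeal K {(1 : σ → K)} ^ N ↔
      p ∈ vanishingIdeal K {fun i => (a i : K)} ^ N := by
  have hmap : (vanishingIdeal K {fun i => (a i : K)}).map (rescale a).toRingEquiv =
      vanishingIdeal K {(1 : σ → K)} := by
    ext q
    obtain ⟨r, rfl⟩ := (rescale a).toRingEquiv.surjective q
    rw [Ideal.apply_mem_of_equiv_iff]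
    simp [aeval_eq_eval, eval_one_rescale]
  rw [← hmap, ← Ideal.map_pow]
  exact Ideal.apply_mem_of_equiv_iff

/-- The expansion of a polynomial at the point `a`, moved to the local ring at `(1, …, 1)`. -/
noncomputable def expandAt (a : σ → Kˣ) : MvPolynomial σ K →ₐ[K] LocalRingAtOne K σ :=
  aeval fun i => (a i : K) • localCoord K i

lemma expandAt_eq_algebraMap (a : σ → Kˣ) (p : MvPolynomial σ K) :
    expandAt a p = algebraMap _ (LocalRingAtOne K σ) (rescale a p) := by
  suffices h : expandAt a = (Algebra.algHom K _ (LocalRingAtOne K σ)).comp (rescale a).toAlgHom from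
    DFunLike.congr_fun h p
  refine algHom_ext fun i => ?_
  rw [expandAt, aeval_X, AlgHom.comp_apply, AlgEquiv.toAlgHom_apply, rescale_X, map_smul]
  rfl

lemma expandAt_mem_maximalIdeal_pow_iff (a : σ → Kˣ) (p : MvPolynomial σ K) (N : ℕ) :
    expandAt a p ∈ maximalIdeal (LocalRingAtOne K σ) ^ N ↔
      p ∈ vanishingIdeal K {fun i => (a i : K)} ^ N := by
  rw [expandAt_eq_algebraMap, ← rescale_mem_vanishingIdeal_pow_iff,
    ← IsLocalization.AtPrime.under_maximalIdeal_pow (vanishingIdeal K {(1 : σ → K)})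
      (LocalRingAtOne K σ) N]
  rfl

lemma exists_sub_expandAt_mem_maximalIdeal_pow (a : σ → Kˣ) (f : LocalRingAtOne K σ) (N : ℕ) :
    ∃ p, f - expandAt a p ∈ maximalIdeal (LocalRingAtOne K σ) ^ N := by
  obtain ⟨p, hp⟩ := exists_sub_algebraMap_mem_maximalIdeal_pow f N
  exact ⟨(rescale a).symm p, by rwa [expandAt_eq_algebraMap, AlgEquiv.apply_symm_apply]⟩

end Rescaling

/-! ### Weights -/

section Weights

/-- The powers of `t` distinguish the integers that occur in the combinatorics of `H_n(K, t, κ)`: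
`t ^ d ≠ 1` for all `0 < d ≤ max (n + κ_k - κ_l)`. -/
def HasLargeOrder {K : Type*} [Field K] (n ℓ : ℕ) (κ : ℕ → ℤ) (t : Kˣ) : Prop :=
  ∀ k < ℓ, ∀ l < ℓ, ∀ d : ℤ, 0 < d → d ≤ n + κ k - κ l → t ^ d ≠ 1

/-- The sequences each of whose entries is joined to some `κ l` by an interval of entries. They
include all `w` for which `([w 1]_t, …, [w n]_t)` is a tuple of simultaneous eigenvalues of the
`L_k`. -/
def weights (n ℓ : ℕ) (κ : ℕ → ℤ) : Set (Fin n → ℤ) :=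
  {w | ∀ k, ∃ l < ℓ, Set.uIcc (κ l) (w k) ⊆ Set.range w}

variable {K : Type*} [Field K] {n ℓ : ℕ} {κ : ℕ → ℤ} {t : Kˣ} {w w' : Fin n → ℤ}

lemma hasLargeOrder_of_forall_pow_ne_one (ht : ∀ d : ℕ, 0 < d → (t : K) ^ d ≠ 1) :
    HasLargeOrder n ℓ κ t := by
  intro k _ l _ d hd _ h
  lift d to ℕ using hd.le
  exact ht d (by exact_mod_cast hd) (by simpa using congrArg Units.val h)

lemma hasLargeOrder_of_isPrimitiveRoot {e : ℕ} (ht : IsPrimitiveRoot (t : K) e)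
    (he : ∀ k l, k < ℓ → l < ℓ → (n : ℤ) + κ k - κ l < e) : HasLargeOrder n ℓ κ t := by
  intro k hk l hl d hd hd' h
  have := Int.le_of_dvd hd ((IsPrimitiveRoot.coe_units_iff.1 ht).zpow_eq_one_iff_dvd d |>.1 h)
  exact (he k l hk hl).not_ge (this.trans hd')

lemma HasLargeOrder.zpow_ne_zpow (ht : HasLargeOrder n ℓ κ t) {k l : ℕ} (hk : k < ℓ) (hl : l < ℓ)
    {a b : ℤ} (hab : a < b) (hba : b - a ≤ n + κ k - κ l) : (t : K) ^ a ≠ (t : K) ^ b := by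
  intro h
  refine ht k hk l hl (b - a) (by lia) hba ?_
  rw [zpow_sub, mul_inv_eq_one]
  exact Units.ext (by simpa using h.symm)

lemma comp_perm_mem_weights (hw : w ∈ weights n ℓ κ) (π : Equiv.Perm (Fin n)) :
    w ∘ π ∈ weights n ℓ κ := fun k => by
  simpa [EquivLike.range_comp] using hw (π k)

lemma card_le_of_coe_subset_range {S : Finset ℤ} (hS : (S : Set ℤ) ⊆ Set.range w) :
    S.card ≤ n := by
  simpa using Finset.card_le_card_of_surjOn (s := .univ) w (by simpa [Set.SurjOn] using hS)

lemma exists_ge_Icc_subset_range (hw : w ∈ weights n ℓ κ) (i : Fin n) :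
    ∃ l < ℓ, ∃ a, w i ≤ a ∧ Set.Icc (κ l) a ⊆ Set.range w := by
  obtain ⟨l, hl, h⟩ := hw i
  refine ⟨l, hl, max (κ l) (w i), le_max_right _ _, fun z hz => h ?_⟩
  simp only [Set.mem_Icc, Set.mem_uIcc] at hz ⊢
  lia

lemma exists_le_Icc_subset_range (hw : w ∈ weights n ℓ κ) (i : Fin n) :
    ∃ l < ℓ, ∃ a, a ≤ w i ∧ Set.Icc a (κ l) ⊆ Set.range w := by
  obtain ⟨l, hl, h⟩ := hw i
  refine ⟨l, hl, min (κ l) (w i), min_le_right _ _, fun z hz => h ?_⟩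
  simp only [Set.mem_Icc, Set.mem_uIcc] at hz ⊢
  lia

lemma exists_sub_lt_of_mem_weights (hw : w ∈ weights n ℓ κ) (i j : Fin n) :
    ∃ k < ℓ, ∃ l < ℓ, w i - w j < n + κ k - κ l := by
  obtain ⟨l, hl, a, hia, ha⟩ := exists_ge_Icc_subset_range hw i
  obtain ⟨m, hm, b, hbj, hb⟩ := exists_le_Icc_subset_range hw j
  rcases lt_or_ge (κ m) (κ l) with hml | hlm
  · refine ⟨l, hl, m, hm, ?_⟩
    have hdisj : Disjoint (Finset.Icc b (κ m)) (Finset.Icc (κ l) a) :=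
      Finset.disjoint_left.2 fun z hz hz' => by simp only [Finset.mem_Icc] at hz hz'; lia
    have hcard := card_le_of_coe_subset_range (S := Finset.Icc b (κ m) ∪ Finset.Icc (κ l) a)
      (by simpa using ⟨hb, ha⟩)
    rw [Finset.card_union_of_disjoint hdisj, Int.card_Icc, Int.card_Icc] at hcard
    lia
  · refine ⟨l, hl, l, hl, ?_⟩
    have hcard := card_le_of_coe_subset_range (w := w) (S := Finset.Icc b a) fun z hz => by
      simp only [Finset.coe_Icc, Set.mem_Icc] at hz
      rcases le_total z (κ m) with hzm | hmz
      · exact hb ⟨hz.1, hzm⟩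
      · exact ha ⟨hlm.trans hmz, hz.2⟩
    rw [Int.card_Icc] at hcard
    lia

lemma exists_sub_charge_lt_of_mem_weights (hw : w ∈ weights n ℓ κ) (i : Fin n) :
    ∃ l < ℓ, w i - κ l < n := by
  obtain ⟨l, hl, a, hia, ha⟩ := exists_ge_Icc_subset_range hw i
  have hcard := card_le_of_coe_subset_range (w := w) (S := Finset.Icc (κ l) a) (by simpa using ha)
  rw [Int.card_Icc] at hcard
  exact ⟨l, hl, by lia⟩

lemma exists_charge_sub_lt_of_mem_weights (hw : w ∈ weights n ℓ κ) (i : Fin n) :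
    ∃ l < ℓ, κ l - w i < n := by
  obtain ⟨l, hl, a, hia, ha⟩ := exists_le_Icc_subset_range hw i
  have hcard := card_le_of_coe_subset_range (w := w) (S := Finset.Icc a (κ l)) (by simpa using ha)
  rw [Int.card_Icc] at hcard
  exact ⟨l, hl, by lia⟩

variable (n ℓ κ) in
lemma finite_weights : (weights n ℓ κ).Finite := by
  have hfin : (⋃ l ∈ Finset.range ℓ, ⋃ m ∈ Finset.range ℓ,
      Set.Icc (κ m - n) (κ l + n)).Finite :=
    (Finset.finite_toSet _).biUnion fun l _ =>
      (Finset.finite_toSet _).biUnion fun m _ => Set.finite_Icc _ _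
  refine (Set.Finite.pi' fun _ : Fin n => hfin).subset fun w hw i => ?_
  obtain ⟨l, hl, hlw⟩ := exists_sub_charge_lt_of_mem_weights hw i
  obtain ⟨m, hm, hmw⟩ := exists_charge_sub_lt_of_mem_weights hw i
  simp only [Set.mem_iUnion, Finset.mem_range, Set.mem_Icc]
  exact ⟨l, hl, m, hm, by lia, by lia⟩

instance : Finite (weights n ℓ κ) := finite_weights n ℓ κ

lemma HasLargeOrder.zpow_ne_zpow_of_mem_weights (ht : HasLargeOrder n ℓ κ t)
    (hw : w ∈ weights n ℓ κ) {i j : Fin n} (hij : w i ≠ w j) :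
    (t : K) ^ w i ≠ (t : K) ^ w j := by
  wlog h : w i < w j generalizing i j
  · exact (this hij.symm (by lia)).symm
  obtain ⟨k, hk, l, hl, hlt⟩ := exists_sub_lt_of_mem_weights hw j i
  exact ht.zpow_ne_zpow hk hl h hlt.le

lemma HasLargeOrder.zpow_add_one_ne_zpow_of_mem_weights (ht : HasLargeOrder n ℓ κ t)
    (hw : w ∈ weights n ℓ κ) {i j : Fin n} (hij : w i + 1 ≠ w j) :
    (t : K) ^ (w i + 1) ≠ (t : K) ^ w j := by
  rcases lt_or_gt_of_ne hij with h | h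
  · obtain ⟨k, hk, l, hl, hlt⟩ := exists_sub_lt_of_mem_weights hw j i
    exact ht.zpow_ne_zpow hk hl h (by lia)
  · obtain ⟨k, hk, l, hl, hlt⟩ := exists_sub_lt_of_mem_weights hw i j
    exact (ht.zpow_ne_zpow hk hl h (by lia)).symm

lemma HasLargeOrder.zpow_ne_zpow_charge (ht : HasLargeOrder n ℓ κ t) (hw : w ∈ weights n ℓ κ)
    {i : Fin n} {l : ℕ} (hl : l < ℓ) (hil : w i ≠ κ l) : (t : K) ^ w i ≠ (t : K) ^ κ l := by
  rcases lt_or_gt_of_ne hil with h | h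
  · obtain ⟨m, hm, hlt⟩ := exists_charge_sub_lt_of_mem_weights hw i
    exact ht.zpow_ne_zpow hl hm h (by lia)
  · obtain ⟨m, hm, hlt⟩ := exists_sub_charge_lt_of_mem_weights hw i
    exact (ht.zpow_ne_zpow hm hl h (by lia)).symm

/-- If `w k < w' k`, the `n + 1` distinct powers `t ^ κ_m, …, t ^ (κ_m + n)`, where `κ_m` is joined
to `w' k` in `w'`, would all be among the `n` values `t ^ w j`. -/
lemma HasLargeOrder.le_of_forall_zpow_eq (ht : HasLargeOrder n ℓ κ t) (hw : w ∈ weights n ℓ κ)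
    (hw' : w' ∈ weights n ℓ κ) (h : ∀ k, (t : K) ^ w k = (t : K) ^ w' k) (k : Fin n) :
    w' k ≤ w k := by
  by_contra! hk
  obtain ⟨l, hl, hlw⟩ := hw k
  obtain ⟨m, hm, hmw⟩ := hw' k
  have hlarge : n + κ m - κ l < w' k - w k := by
    by_contra! hle
    exact ht.zpow_ne_zpow hm hl hk hle (h k)
  have hsurj : ∀ z ∈ Finset.Icc (κ m) (κ m + n), ∃ j, (t : K) ^ w j = (t : K) ^ z := by
    intro z hz
    rw [Finset.mem_Icc] at hz
    rcases le_or_gt z (w' k) with hzk | hkz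
    · obtain ⟨j, rfl⟩ := hmw (Set.mem_uIcc.2 (.inl ⟨hz.1, hzk⟩))
      exact ⟨j, h j⟩
    · obtain ⟨j, hj⟩ := hlw (Set.mem_uIcc.2 (.inr ⟨by lia, by lia⟩) :
        z - (w' k - w k) ∈ Set.uIcc (κ l) (w k))
      refine ⟨j, ?_⟩
      rw [hj, zpow_sub₀ t.ne_zero, zpow_sub₀ t.ne_zero, h k,
        div_self (zpow_ne_zero _ t.ne_zero), div_one]
  have hinj : Set.InjOn (fun z : ℤ => (t : K) ^ z) (Finset.Icc (κ m) (κ m + n)) := by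
    intro a ha b hb hab
    by_contra hne
    rw [Finset.coe_Icc, Set.mem_Icc] at ha hb
    rcases lt_or_gt_of_ne hne with hlt | hlt
    · exact ht.zpow_ne_zpow hm hm hlt (by lia) hab
    · exact ht.zpow_ne_zpow hm hm hlt (by lia) hab.symm
  have hcard : (Finset.Icc (κ m) (κ m + n)).card ≤ (Finset.univ : Finset (Fin n)).card := by
    rw [← Finset.card_image_of_injOn hinj]
    refine Finset.card_le_card_of_surjOn (fun j => (t : K) ^ w j) fun x hx => ?_
    obtain ⟨z, hz, rfl⟩ := Finset.mem_image.1 (Finset.mem_coe.1 hx)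
    simpa using hsurj z hz
  simp only [Int.card_Icc, Finset.card_univ, Fintype.card_fin] at hcard
  lia

lemma HasLargeOrder.eq_of_forall_zpow_eq (ht : HasLargeOrder n ℓ κ t) (hw : w ∈ weights n ℓ κ)
    (hw' : w' ∈ weights n ℓ κ) (h : ∀ k, (t : K) ^ w k = (t : K) ^ w' k) : w = w' :=
  funext fun k => le_antisymm (ht.le_of_forall_zpow_eq hw' hw (fun k => (h k).symm) k)
    (ht.le_of_forall_zpow_eq hw hw' h k)

lemma mem_weights_of_forall_exists_lt
    (h : ∀ k, (∃ l < ℓ, w k = κ l) ∨ ∃ j < k, w j = w k + 1 ∨ w k = w j + 1) :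
    w ∈ weights n ℓ κ := by
  intro k
  induction k using WellFoundedLT.induction with
  | ind k ih =>
    rcases h k with ⟨l, hl, hk⟩ | ⟨j, hj, hjk⟩
    · exact ⟨l, hl, by simp [← hk]⟩
    · obtain ⟨l, hl, hlj⟩ := ih j hj
      refine ⟨l, hl, fun z hz => ?_⟩
      by_cases hzk : z = w k
      · exact ⟨k, hzk.symm⟩
      · refine hlj ?_
        rw [Set.mem_uIcc] at hz ⊢
        lia

end Weights

/-! ### The weight ring -/

section WeightRing

/-- Functions from `weights n ℓ κ` to the local ring at `(1, …, 1)`: a substitute, independent of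
`t`, for the functions on the formal neighbourhood of the joint spectrum of the
`1 + (t - 1) L_k`. -/
abbrev WeightRing (K : Type*) [Field K] (n ℓ : ℕ) (κ : ℕ → ℤ) : Type _ :=
  weights n ℓ κ → LocalRingAtOne K (Fin n)

variable {K : Type*} [Field K] {n ℓ : ℕ} {κ : ℕ → ℤ}

variable (K ℓ κ) in
/-- The action of `π` on `WeightRing K n ℓ κ`, which permutes weights and coordinates. -/
noncomputable def permuteWeights (π : Equiv.Perm (Fin n)) :
    WeightRing K n ℓ κ →ₐ[K] WeightRing K n ℓ κ :=
  AlgHom.pi fun w => (permuteLocal K π).toAlgHom.comp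
    (Pi.evalAlgHom K _ ⟨w.1 ∘ π, comp_perm_mem_weights w.2 π⟩)

variable (ℓ κ) in
/-- The element of `WeightRing K n ℓ κ` that stands for `1 + (t - 1) L_i`: near the weight `w` it
is a coordinate with value `t ^ w i`. -/
noncomputable def weightCoord (t : Kˣ) (i : Fin n) : WeightRing K n ℓ κ :=
  fun w => (t : K) ^ w.1 i • localCoord K i

variable (K n ℓ κ) in
/-- The functions that vanish to order at least `N` at every weight. -/
noncomputable def orderIdeal (N : ℕ) : Ideal (WeightRing K n ℓ κ) :=
  Ideal.pi fun _ => maximalIdeal (LocalRingAtOne K (Fin n)) ^ N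

lemma permuteWeights_apply (π : Equiv.Perm (Fin n)) (f : WeightRing K n ℓ κ) (w : weights n ℓ κ) :
    permuteWeights K ℓ κ π f w =
      permuteLocal K π (f ⟨w.1 ∘ π, comp_perm_mem_weights w.2 π⟩) := rfl

lemma permuteWeights_weightCoord (t : Kˣ) (π : Equiv.Perm (Fin n)) (i : Fin n) :
    permuteWeights K ℓ κ π (weightCoord ℓ κ t i) = weightCoord ℓ κ t (π i) := by
  funext w
  simp [permuteWeights_apply, weightCoord]

lemma mem_orderIdeal {N : ℕ} {f : WeightRing K n ℓ κ} :
    f ∈ orderIdeal K n ℓ κ N ↔ ∀ w, f w ∈ maximalIdeal (LocalRingAtOne K (Fin n)) ^ N :=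
  Ideal.mem_pi _ _

lemma orderIdeal_antitone : Antitone (orderIdeal K n ℓ κ) := fun _ _ h _ hf =>
  mem_orderIdeal.2 fun w => Ideal.pow_le_pow_right h (mem_orderIdeal.1 hf w)

lemma permuteWeights_mem_orderIdeal (π : Equiv.Perm (Fin n)) {N : ℕ} {f : WeightRing K n ℓ κ}
    (hf : f ∈ orderIdeal K n ℓ κ N) : permuteWeights K ℓ κ π f ∈ orderIdeal K n ℓ κ N :=
  mem_orderIdeal.2 fun _ => permuteLocal_mem_maximalIdeal_pow π (mem_orderIdeal.1 hf _)

lemma isLeftRegular_smul_weightCoord_sub (t : Kˣ) {p : K} (hp : p ≠ 0) (q : K) {i j : Fin n}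
    (hij : i ≠ j) : IsLeftRegular (p • weightCoord ℓ κ t i - q • weightCoord ℓ κ t j) := by
  refine Pi.isLeftRegular_iff.2 fun w => (IsRegular.of_ne_zero ?_).left
  simp only [weightCoord, Pi.sub_apply, Pi.smul_apply, smul_smul]
  exact smul_localCoord_sub_ne_zero (mul_ne_zero hp (zpow_ne_zero _ t.ne_zero)) _ hij

lemma weightCoord_sub_dvd {t t' : Kˣ} (ht : HasLargeOrder n ℓ κ t) (i j : Fin n) :
    weightCoord ℓ κ t i - weightCoord ℓ κ t j ∣ weightCoord ℓ κ t' i - weightCoord ℓ κ t' j := by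
  refine pi_dvd_iff.2 fun w => smul_localCoord_sub_dvd (zpow_ne_zero _ t.ne_zero) (fun h => ?_) i j
  rw [not_imp_not.1 (ht.zpow_ne_zpow_of_mem_weights w.2) h]

lemma smul_weightCoord_sub_dvd {t t' : Kˣ} (ht : HasLargeOrder n ℓ κ t) (i j : Fin n) :
    (t : K) • weightCoord ℓ κ t i - weightCoord ℓ κ t j ∣
      (t' : K) • weightCoord ℓ κ t' i - weightCoord ℓ κ t' j := by
  refine pi_dvd_iff.2 fun w => ?_
  simp only [weightCoord, Pi.sub_apply, Pi.smul_apply, smul_smul, ← zpow_one_add₀ t.ne_zero,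
    ← zpow_one_add₀ t'.ne_zero, add_comm (1 : ℤ)]
  refine smul_localCoord_sub_dvd (zpow_ne_zero _ t.ne_zero) (fun h => ?_) i j
  rw [not_imp_not.1 (ht.zpow_add_one_ne_zpow_of_mem_weights w.2) h]

lemma weightCoord_sub_charge_dvd {t t' : Kˣ} (ht : HasLargeOrder n ℓ κ t) (i : Fin n) {l : ℕ}
    (hl : l < ℓ) :
    weightCoord ℓ κ t i - algebraMap K (WeightRing K n ℓ κ) ((t : K) ^ κ l) ∣
      weightCoord ℓ κ t' i - algebraMap K (WeightRing K n ℓ κ) ((t' : K) ^ κ l) := by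
  refine pi_dvd_iff.2 fun w =>
    smul_localCoord_sub_algebraMap_dvd (zpow_ne_zero _ t.ne_zero) (fun h => ?_) i
  rw [not_imp_not.1 (ht.zpow_ne_zpow_charge w.2 hl) h]

/-- The divided difference lowers the order of vanishing by at most one: at the weights with
`w i = w j` it is the usual divided difference, and at the others `x_i - x_j` is a unit. -/
lemma exists_mem_orderIdeal_mul_eq_permuteWeights_swap_sub {t : Kˣ} (ht : HasLargeOrder n ℓ κ t)
    (i j : Fin n) {N : ℕ} {f : WeightRing K n ℓ κ} (hf : f ∈ orderIdeal K n ℓ κ N) :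
    ∃ g ∈ orderIdeal K n ℓ κ (N - 1), (weightCoord ℓ κ t i - weightCoord ℓ κ t j) * g =
      permuteWeights K ℓ κ (Equiv.swap i j) f - f := by
  suffices h : ∀ w, ∃ g ∈ maximalIdeal (LocalRingAtOne K (Fin n)) ^ (N - 1),
      (weightCoord ℓ κ t i w - weightCoord ℓ κ t j w) * g =
        (permuteWeights K ℓ κ (Equiv.swap i j) f - f) w by
    choose g hg hgf using h
    exact ⟨g, mem_orderIdeal.2 hg, funext hgf⟩
  intro w
  by_cases hw : w.1 i = w.1 j
  · obtain ⟨g, hg, hgf⟩ :=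
      exists_mem_maximalIdeal_pow_mul_eq_permuteLocal_swap_sub i j (mem_orderIdeal.1 hf w)
    refine ⟨((t : K) ^ w.1 j)⁻¹ • g, Submodule.smul_of_tower_mem _ _ hg, ?_⟩
    have hswap : w.1 ∘ Equiv.swap i j = w.1 := by
      funext k
      rw [Function.comp_apply, Equiv.swap_apply_def]
      split_ifs with hi hj
      · rw [hi, hw]
      · rw [hj, hw]
      · rfl
    simp only [Pi.sub_apply, permuteWeights_apply, hswap, Subtype.coe_eta]
    rw [← hgf, weightCoord, weightCoord, hw, mul_smul_comm, ← smul_mul_assoc, smul_sub, smul_smul,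
      smul_smul, inv_mul_cancel₀ (zpow_ne_zero _ t.ne_zero), one_smul, one_smul]
  · obtain ⟨u, hu⟩ : IsUnit (weightCoord ℓ κ t i w - weightCoord ℓ κ t j w) :=
      isUnit_smul_localCoord_sub (ht.zpow_ne_zpow_of_mem_weights w.2 hw) i j
    refine ⟨↑u⁻¹ * (permuteWeights K ℓ κ (Equiv.swap i j) f - f) w, ?_, ?_⟩
    · exact Ideal.mul_mem_left _ _ (Ideal.pow_le_pow_right (Nat.sub_le N 1)
        (mem_orderIdeal.1 (sub_mem (permuteWeights_mem_orderIdeal _ hf) hf) w))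
    · rw [← hu, Units.mul_inv_cancel_left]

end WeightRing

section Evaluation

variable {K : Type*} [Field K] {n ℓ : ℕ} {κ : ℕ → ℤ} {t : Kˣ}

/-- The maximal ideal of the point `(t ^ w 1, …, t ^ w n)` of affine space. -/
noncomputable def weightIdeal (t : Kˣ) (w : Fin n → ℤ) : Ideal (MvPolynomial (Fin n) K) :=
  vanishingIdeal K {fun i => (t : K) ^ w i}

instance (t : Kˣ) (w : Fin n → ℤ) : (weightIdeal t w).IsMaximal :=
  inferInstanceAs (vanishingIdeal K {_}).IsMaximal

lemma mem_weightIdeal {w : Fin n → ℤ} {p : MvPolynomial (Fin n) K} :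
    p ∈ weightIdeal t w ↔ eval (fun i => (t : K) ^ w i) p = 0 := by
  simp [weightIdeal, aeval_eq_eval]

lemma HasLargeOrder.isCoprime_weightIdeal_pow (ht : HasLargeOrder n ℓ κ t) (N : ℕ) :
    Pairwise fun w w' : weights n ℓ κ =>
      IsCoprime (weightIdeal t w.1 ^ N) (weightIdeal t w'.1 ^ N) := by
  intro w w' hne
  refine (Ideal.isCoprime_of_isMaximal fun h => hne (Subtype.ext ?_)).pow
  refine ht.eq_of_forall_zpow_eq w.2 w'.2 fun k => ?_
  have hk : X k - C ((t : K) ^ w'.1 k) ∈ weightIdeal t w.1 := by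
    rw [h, mem_weightIdeal]
    simp
  simpa [mem_weightIdeal, sub_eq_zero] using hk

lemma aeval_weightCoord_apply (t : Kˣ) (p : MvPolynomial (Fin n) K) (w : weights n ℓ κ) :
    aeval (weightCoord ℓ κ t) p w = expandAt (fun i => t ^ w.1 i) p := by
  suffices h : (Pi.evalAlgHom K _ w).comp (aeval (weightCoord ℓ κ t)) =
      expandAt fun i => t ^ w.1 i from DFunLike.congr_fun h p
  exact algHom_ext fun i => by simp [expandAt, weightCoord]

lemma aeval_weightCoord_mem_orderIdeal_iff {p : MvPolynomial (Fin n) K} {N : ℕ} :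
    aeval (weightCoord ℓ κ t) p ∈ orderIdeal K n ℓ κ N ↔
      p ∈ ⨅ w : weights n ℓ κ, weightIdeal t w.1 ^ N := by
  simp only [mem_orderIdeal, Ideal.mem_iInf, aeval_weightCoord_apply,
    expandAt_mem_maximalIdeal_pow_iff, weightIdeal, Units.val_zpow_eq_zpow_val]

/-- By the Chinese remainder theorem, since the points `t ^ w` are distinct. -/
lemma HasLargeOrder.exists_sub_aeval_weightCoord_mem_orderIdeal (ht : HasLargeOrder n ℓ κ t)
    (f : WeightRing K n ℓ κ) (N : ℕ) :
    ∃ p : MvPolynomial (Fin n) K, f - aeval (weightCoord ℓ κ t) p ∈ orderIdeal K n ℓ κ N := by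
  choose q hq using fun w : weights n ℓ κ =>
    exists_sub_expandAt_mem_maximalIdeal_pow (fun i => t ^ w.1 i) (f w) N
  obtain ⟨p, hp⟩ := Ideal.exists_forall_sub_mem_ideal (ht.isCoprime_weightIdeal_pow N) q
  refine ⟨p, mem_orderIdeal.2 fun w => ?_⟩
  rw [Pi.sub_apply, aeval_weightCoord_apply, ← sub_add_sub_cancel _ (expandAt _ (q w))]
  refine add_mem (hq w) ?_
  rw [← map_sub, expandAt_mem_maximalIdeal_pow_iff, ← neg_sub, neg_mem_iff]
  simpa [weightIdeal] using hp w

lemma HasLargeOrder.subalgebra_eq_top (ht : HasLargeOrder n ℓ κ t)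
    {S : Subalgebra K (WeightRing K n ℓ κ)} (hcoord : ∀ i, weightCoord ℓ κ t i ∈ S) {N : ℕ}
    (horder : ∀ f ∈ orderIdeal K n ℓ κ N, f ∈ S) : S = ⊤ := by
  refine Algebra.eq_top_iff.2 fun f => ?_
  obtain ⟨p, hp⟩ := ht.exists_sub_aeval_weightCoord_mem_orderIdeal f N
  rw [← sub_add_cancel f (aeval (weightCoord ℓ κ t) p)]
  have hadjoin : Algebra.adjoin K (Set.range (weightCoord ℓ κ t)) ≤ S :=
    Algebra.adjoin_le (Set.range_subset_iff.2 hcoord)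
  rw [Algebra.adjoin_range_eq_range_aeval] at hadjoin
  exact add_mem (horder _ hp) (hadjoin ⟨p, rfl⟩)

lemma HasLargeOrder.exists_algHom_comp_aeval_eq (ht : HasLargeOrder n ℓ κ t) {A : Type*} [Ring A]
    [Algebra K A] (φ : MvPolynomial (Fin n) K →ₐ[K] A) {N : ℕ}
    (hφ : ⨅ w : weights n ℓ κ, weightIdeal t w.1 ^ N ≤ RingHom.ker φ) :
    ∃ ev : WeightRing K n ℓ κ →ₐ[K] A, ev.comp (aeval (weightCoord ℓ κ t)) = φ ∧
      orderIdeal K n ℓ κ N ≤ RingHom.ker ev := by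
  let ψ := (Ideal.Quotient.mkₐ K (orderIdeal K n ℓ κ N)).comp (aeval (weightCoord ℓ κ t))
  have hψ : Function.Surjective ψ := by
    intro y
    obtain ⟨f, rfl⟩ := Ideal.Quotient.mk_surjective y
    obtain ⟨p, hp⟩ := ht.exists_sub_aeval_weightCoord_mem_orderIdeal f N
    exact ⟨p, (Ideal.Quotient.eq.2 hp).symm⟩
  have hker : ∀ p, p ∈ RingHom.ker ψ → φ p = 0 := fun p hp =>
    hφ (aeval_weightCoord_mem_orderIdeal_iff.1 (Ideal.Quotient.eq_zero_iff_mem.1 hp))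
  let ev := ((Ideal.Quotient.liftₐ (RingHom.ker ψ) φ hker).comp
    (Ideal.quotientKerAlgEquivOfSurjective hψ).symm.toAlgHom).comp
      (Ideal.Quotient.mkₐ K (orderIdeal K n ℓ κ N))
  refine ⟨ev, AlgHom.ext fun p => ?_, fun f hf => ?_⟩
  · have : (Ideal.quotientKerAlgEquivOfSurjective hψ).symm (ψ p) = Ideal.Quotient.mk _ p := by
      rw [AlgEquiv.symm_apply_eq]
      rfl
    change Ideal.Quotient.liftₐ (RingHom.ker ψ) φ hker
      ((Ideal.quotientKerAlgEquivOfSurjective hψ).symm (ψ p)) = φ p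
    rw [this]
    rfl
  · have : Ideal.Quotient.mkₐ K (orderIdeal K n ℓ κ N) f = 0 := Ideal.Quotient.eq_zero_iff_mem.2 hf
    rw [RingHom.mem_ker, AlgHom.comp_apply, this, map_zero]

end Evaluation

/-! ### Elements `(p x_i - q x_j) / (x_i - x_j) * (s - 1)` of skew group rings -/

section Transition

variable {K R A ι : Type*} [Field K] [CommRing R] [Algebra K R] [Ring A] [Algebra K A]

/-- `θ i j` is the quotient of the coefficients `(p' x'_i - q' x'_j) / (x'_i - x'_j)` and
`(p x_i - q x_j) / (x_i - x_j)`. -/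
def IsTransition (x x' : ι → R) (p q p' q' : K) (θ : ι → ι → R) : Prop :=
  ∀ i j, (p • x i - q • x j) * (x' i - x' j) * θ i j = (p' • x' i - q' • x' j) * (x i - x j)

variable {x x' : ι → R} {p q p' q' : K} {θ θ' : ι → ι → R} {i j k l : ι} {D E : A}

lemma IsTransition.symm (hθ : IsTransition x x' p q p' q' θ) :
    IsTransition x x' q p q' p' fun i j => θ j i := fun i j => by
  linear_combination hθ j i

lemma braid_of_commutation_rules {a b c γ δ δ' η : A} {r : K} (hDc : D * c = b * D + γ)
    (hDb : D * b = c * D - γ) (hEa : E * a = b * E + δ) (hDδ : D * δ = δ' * D + η)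
    (hγb : Commute γ b) (hDD : D * D = -(p + q) • D)
    (hcoeff : -(p + q) • (b * δ') + b * η + γ * δ = r • 1 - (p * q) • (b * c)) :
    a * D * (c * E) * (a * D) - r • (a * D) = a * b * c * (D * E * D - (p * q) • D) := by
  calc a * D * (c * E) * (a * D) - r • (a * D)
      = a * (D * c) * (E * a) * D - r • (a * D) := by noncomm_ring
    _ = a * (b * (D * b) * E * D + b * (D * δ) * D + (γ * b) * E * D + γ * δ * D) -
          r • (a * D) := by rw [hDc, hEa]; noncomm_ring
    _ = a * (b * c * (D * E * D) + b * δ' * (D * D) + (b * η + γ * δ) * D) - r • (a * D) := by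
        rw [hDb, hDδ, hγb.eq]; noncomm_ring
    _ = a * (b * c * (D * E * D) + (-(p + q) • (b * δ') + b * η + γ * δ) * D) -
          r • (a * D) := by
        rw [hDD, mul_smul_comm, add_assoc (_ • _), add_mul (_ • _), smul_mul_assoc, add_assoc]
    _ = a * b * c * (D * E * D - (p * q) • D) := by
        rw [hcoeff, sub_mul, smul_mul_assoc, one_mul]
        simp only [mul_add, mul_sub, mul_smul_comm, smul_mul_assoc, mul_assoc]
        abel

variable [DecidableEq ι] {act : Equiv.Perm ι → R →ₐ[K] R} {ev : R →ₐ[K] A}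

/-- The family `x` behaves, under the permutations `act π`, like a family of coordinates: it is
permuted, its linear combinations can be cancelled, and divided differences exist. -/
structure IsCoordSystem (act : Equiv.Perm ι → R →ₐ[K] R) (x : ι → R) : Prop where
  act_apply (π : Equiv.Perm ι) (i : ι) : act π (x i) = x (π i)
  isLeftRegular_smul_sub {p : K} (hp : p ≠ 0) (q : K) {i j : ι} (hij : i ≠ j) :
    IsLeftRegular (p • x i - q • x j)
  sub_dvd_act_swap_sub (i j : ι) (f : R) : x i - x j ∣ act (Equiv.swap i j) f - f

/-- `D` satisfies the commutation rule with functions of the element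
`(p x_i - q x_j) / (x_i - x_j) * (s - 1)` of a skew group ring, where `s` is the transposition of
`i` and `j`. The divided difference is expressed by an equation for `g`, to avoid fractions. -/
def IsDemazure (act : Equiv.Perm ι → R →ₐ[K] R) (ev : R →ₐ[K] A) (x : ι → R) (p q : K) (i j : ι)
    (D : A) : Prop :=
  ∀ f g, (x i - x j) * g = (p • x i - q • x j) * (act (Equiv.swap i j) f - f) →
    D * ev f = ev (act (Equiv.swap i j) f) * D + ev g

lemma IsCoordSystem.isLeftRegular_sub (hx : IsCoordSystem act x) (hij : i ≠ j) :
    IsLeftRegular (x i - x j) := by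
  simpa using hx.isLeftRegular_smul_sub one_ne_zero 1 hij

lemma IsCoordSystem.exists_mul_eq (hx : IsCoordSystem act x) (p q : K) (i j : ι) (f : R) :
    ∃ g, (x i - x j) * g = (p • x i - q • x j) * (act (Equiv.swap i j) f - f) := by
  obtain ⟨h, hh⟩ := hx.sub_dvd_act_swap_sub i j f
  exact ⟨(p • x i - q • x j) * h, by rw [hh]; ring⟩

lemma IsDemazure.symm (hD : IsDemazure act ev x p q i j D) : IsDemazure act ev x q p j i D := by
  intro f g h
  rw [Equiv.swap_comm] at h ⊢
  exact hD f g (by linear_combination -h)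

lemma IsTransition.act_apply (hx : IsCoordSystem act x) (hx' : IsCoordSystem act x') (hp : p ≠ 0)
    (hθ : IsTransition x x' p q p' q' θ) (π : Equiv.Perm ι) (hij : i ≠ j) :
    act π (θ i j) = θ (π i) (π j) := by
  have hπ : π i ≠ π j := π.injective.ne hij
  refine ((hx.isLeftRegular_smul_sub hp q hπ).mul (hx'.isLeftRegular_sub hπ)) ?_
  have h := congrArg (act π) (hθ i j)
  simp only [map_mul, map_sub, map_smul, hx.act_apply, hx'.act_apply] at h
  exact h.trans (hθ _ _).symm

lemma IsTransition.mul_eq_one (hx : IsCoordSystem act x) (hx' : IsCoordSystem act x') (hp : p ≠ 0)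
    (hp' : p' ≠ 0) (hθ : IsTransition x x' p q p' q' θ) (hθ' : IsTransition x' x p' q' p q θ')
    (hij : i ≠ j) : θ i j * θ' i j = 1 := by
  refine (((hx.isLeftRegular_smul_sub hp q hij).mul (hx'.isLeftRegular_sub hij)).mul
    ((hx'.isLeftRegular_smul_sub hp' q' hij).mul (hx.isLeftRegular_sub hij))) ?_
  beta_reduce
  linear_combination ((p' • x' i - q' • x' j) * (x i - x j) * θ' i j) * hθ i j +
    ((p' • x' i - q' • x' j) * (x i - x j)) * hθ' i j

lemma IsDemazure.transition (hx : IsCoordSystem act x) (hx' : IsCoordSystem act x')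
    (hθ : IsTransition x x' p q p' q' θ) (hij : i ≠ j) (hD : IsDemazure act ev x p q i j D) :
    IsDemazure act ev x' p' q' i j (ev (θ i j) * D) := by
  intro f g hg
  obtain ⟨h, hh⟩ := hx.exists_mul_eq p q i j f
  have hθh : θ i j * h = g := by
    refine (hx.isLeftRegular_sub hij).mul (hx'.isLeftRegular_sub hij) ?_
    beta_reduce
    linear_combination (x' i - x' j) * θ i j * hh +
      (act (Equiv.swap i j) f - f) * hθ i j - (x i - x j) * hg
  rw [mul_assoc, hD f h hh, mul_add, ← map_mul, hθh, ← mul_assoc, ← mul_assoc, ← map_mul,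
    ← map_mul, mul_comm (θ i j)]

lemma IsDemazure.commute_ev (hD : IsDemazure act ev x p q i j D) {f : R}
    (hf : act (Equiv.swap i j) f = f) : Commute D (ev f) := by
  simpa [hf, Commute, SemiconjBy] using hD f 0 (by simp [hf])

lemma IsDemazure.commute_transition (hx : IsCoordSystem act x) (hx' : IsCoordSystem act x')
    (hp : p ≠ 0) (hθ : IsTransition x x' p q p' q' θ) (hij : i ≠ j) (hkl : k ≠ l) (hik : i ≠ k)
    (hil : i ≠ l) (hjk : j ≠ k) (hjl : j ≠ l) (hD : IsDemazure act ev x p q i j D)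
    (hE : IsDemazure act ev x p q k l E) (hDE : Commute D E) :
    Commute (ev (θ i j) * D) (ev (θ k l) * E) := by
  have hθkl : Commute D (ev (θ k l)) := hD.commute_ev <| by
    rw [hθ.act_apply hx hx' hp _ hkl, Equiv.swap_apply_of_ne_of_ne hik.symm hjk.symm,
      Equiv.swap_apply_of_ne_of_ne hil.symm hjl.symm]
  have hθij : Commute (ev (θ i j)) E := (hE.commute_ev <| by
    rw [hθ.act_apply hx hx' hp _ hij, Equiv.swap_apply_of_ne_of_ne hik hil,
      Equiv.swap_apply_of_ne_of_ne hjk hjl]).symm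
  have hθθ : Commute (ev (θ i j)) (ev (θ k l)) := (Commute.all _ _).map ev
  exact (hθθ.mul_right hθij).mul_left (hθkl.mul_right hDE)

lemma IsDemazure.transition_mul_self (hx : IsCoordSystem act x) (hx' : IsCoordSystem act x')
    (hp : p ≠ 0) (hθ : IsTransition x x' p q p' q' θ) (hij : i ≠ j)
    (hD : IsDemazure act ev x p q i j D) (hDD : D * D = -(p + q) • D) :
    ev (θ i j) * D * (ev (θ i j) * D) = -(p' + q') • (ev (θ i j) * D) := by
  obtain ⟨g, hg⟩ := hx.exists_mul_eq p q i j (θ i j)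
  have hDθ := hD _ _ hg
  have hact : act (Equiv.swap i j) (θ i j) = θ j i := by
    simp [hθ.act_apply hx hx' hp _ hij]
  rw [hact] at hg hDθ
  have hcoeff : -(p + q) • θ j i + g = algebraMap K R (-(p' + q')) := by
    refine (hx.isLeftRegular_sub hij).mul (hx'.isLeftRegular_sub hij) ?_
    have h_ij := hθ i j
    have h_ji := hθ j i
    simp only [Algebra.smul_def, map_neg, map_add] at hg h_ij h_ji ⊢
    linear_combination (x' i - x' j) * hg - h_ij - h_ji
  calc ev (θ i j) * D * (ev (θ i j) * D) = ev (θ i j) * (D * ev (θ i j)) * D := by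
        simp only [mul_assoc]
    _ = ev (θ i j) * ev (-(p + q) • θ j i + g) * D := by
        rw [hDθ, map_add, map_smul, mul_add, add_mul, mul_assoc, mul_assoc, hDD]
        simp only [mul_add, add_mul, mul_assoc, mul_smul_comm, smul_mul_assoc]
    _ = -(p' + q') • (ev (θ i j) * D) := by
        rw [hcoeff, AlgHom.commutes, mul_assoc, ← Algebra.smul_def, mul_smul_comm]

/-- The quotients `c a b = (p x_a - q x_b) / (x_a - x_b)`, and likewise those for `x'`, satisfy
`c i j * c j k + c i k * c j i - c i k * c j k = p * q`. -/
lemma IsTransition.braid_coefficient (hx : IsCoordSystem act x) (hx' : IsCoordSystem act x')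
    (hθ : IsTransition x x' p q p' q' θ) (hij : i ≠ j) (hik : i ≠ k) (hjk : j ≠ k) {γ δ δ' η : R}
    (hγ : (x i - x j) * γ = (p • x i - q • x j) * (θ i k - θ j k))
    (hδ : (x j - x k) * δ = (p • x j - q • x k) * (θ i k - θ i j))
    (hδ' : (x i - x k) * δ' = (p • x i - q • x k) * (θ j k - θ j i))
    (hη : (x i - x j) * η = (p • x i - q • x j) * (δ' - δ)) :
    -(p + q) • (θ i k * δ') + θ i k * η + γ * δ =
      (p' * q') • 1 - (p * q) • (θ i k * θ j k) := by
  refine (((hx.isLeftRegular_sub hij).mul (hx.isLeftRegular_sub hik)).mul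
    (hx.isLeftRegular_sub hjk)).mul (((hx'.isLeftRegular_sub hij).mul
    (hx'.isLeftRegular_sub hik)).mul (hx'.isLeftRegular_sub hjk)) ?_
  have h_ij := hθ i j
  have h_ji := hθ j i
  have h_ik := hθ i k
  have h_jk := hθ j k
  simp only [Algebra.smul_def, map_neg, map_add, map_mul] at h_ij h_ji h_ik h_jk hγ hδ hδ' hη ⊢
  generalize algebraMap K R p = p, algebraMap K R q = q, algebraMap K R p' = p',
    algebraMap K R q' = q' at *
  linear_combination
    (x i - x k) * (x j - x k) * ((x' i - x' j) * (x' i - x' k) * (x' j - x' k)) *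
      (θ i k * hη + δ * hγ) +
    ((x' i - x' j) * (x' i - x' k) * (x' j - x' k)) *
      (θ i k * (p * x j - q * x i) * (x j - x k) * hδ' -
        θ j k * (p * x i - q * x j) * (x i - x k) * hδ) -
    (x' i - x' j) * (x' j - x' k) * ((x j - x k) * (p * x j - q * x i) * θ j i +
      (x i - x j) * (p * x j - q * x k) * θ j k) * h_ik +
    (x i - x k) * (x j - x k) * (x' j - x' k) * (p' * x' i - q' * x' k) * h_ji +
    (x i - x k) * (x' i - x' k) * (x' j - x' k) * θ j k * (p * x j - q * x k) * h_ij +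
    (x i - x j) * (x i - x k) * ((x' i - x' k) * (p' * x' i - q' * x' j) -
      (x' i - x' j) * (p' * x' i - q' * x' k)) * h_jk

lemma IsDemazure.transition_braid (hx : IsCoordSystem act x) (hx' : IsCoordSystem act x')
    (hp : p ≠ 0) (hθ : IsTransition x x' p q p' q' θ) (hij : i ≠ j) (hik : i ≠ k) (hjk : j ≠ k)
    (hD : IsDemazure act ev x p q i j D) (hE : IsDemazure act ev x p q j k E)
    (hDD : D * D = -(p + q) • D) :
    ev (θ i j) * D * (ev (θ j k) * E) * (ev (θ i j) * D) - (p' * q') • (ev (θ i j) * D) =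
      ev (θ i j * θ i k * θ j k) * (D * E * D - (p * q) • D) := by
  have hact (π : Equiv.Perm ι) {a b : ι} (hab : a ≠ b) : act π (θ a b) = θ (π a) (π b) :=
    hθ.act_apply hx hx' hp π hab
  have hs_ij : act (Equiv.swap i j) (θ i j) = θ j i := by simp [hact _ hij]
  have hs_ik : act (Equiv.swap i j) (θ i k) = θ j k := by
    rw [hact _ hik, Equiv.swap_apply_left, Equiv.swap_apply_of_ne_of_ne hik.symm hjk.symm]
  have hs_jk : act (Equiv.swap i j) (θ j k) = θ i k := by
    rw [hact _ hjk, Equiv.swap_apply_right, Equiv.swap_apply_of_ne_of_ne hik.symm hjk.symm]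
  have hr_ij : act (Equiv.swap j k) (θ i j) = θ i k := by
    rw [hact _ hij, Equiv.swap_apply_left, Equiv.swap_apply_of_ne_of_ne hij hik]
  obtain ⟨γ, hγ⟩ := hx.exists_mul_eq p q i j (θ j k)
  obtain ⟨δ, hδ⟩ := hx.exists_mul_eq p q j k (θ i j)
  obtain ⟨η, hη⟩ := hx.exists_mul_eq p q i j δ
  have hδ' := congrArg (act (Equiv.swap i j)) hδ
  have hDjk := hD _ _ hγ
  have hDik := hD (θ i k) (-γ) (by rw [hs_ik, mul_neg, hγ, hs_jk]; ring)
  have hDδ := hD _ _ hη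
  have hEij := hE _ _ hδ
  simp only [hs_ik, hs_jk, hr_ij, hs_ij, map_mul, map_sub, map_smul, map_neg, hx.act_apply,
    Equiv.swap_apply_right, Equiv.swap_apply_of_ne_of_ne hik.symm hjk.symm]
    at hγ hδ hδ' hDjk hDik hEij
  have hcoeff := congrArg ev (hθ.braid_coefficient hx hx' hij hik hjk hγ hδ hδ' hη)
  simp only [map_add, map_sub, map_smul, map_mul, map_one] at hcoeff hDjk hDik hDδ hEij ⊢
  exact braid_of_commutation_rules hDjk (hDik.trans (sub_eq_add_neg _ _).symm) hEij hDδ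
    ((Commute.all γ (θ i k)).map ev) hDD hcoeff

end Transition

section Demazure

variable {K R A ι : Type*} [Field K] [CommRing R] [Algebra K R] [Ring A] [Algebra K A]
  [DecidableEq ι]

/-- The functions with which `D` commutes in the way required by `IsDemazure`. -/
def demazureSubalgebra (act : Equiv.Perm ι → R →ₐ[K] R) (ev : R →ₐ[K] A) (x : ι → R) (p q : K)
    (i j : ι) (D : A) : Subalgebra K R where
  carrier := {f | ∃ g, (x i - x j) * g = (p • x i - q • x j) * (act (Equiv.swap i j) f - f) ∧
    D * ev f = ev (act (Equiv.swap i j) f) * D + ev g}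
  algebraMap_mem' a := ⟨0, by simp [Algebra.commutes]⟩
  add_mem' := by
    rintro f₁ f₂ ⟨g₁, hg₁, h₁⟩ ⟨g₂, hg₂, h₂⟩
    refine ⟨g₁ + g₂, ?_, ?_⟩
    · rw [map_add]
      linear_combination hg₁ + hg₂
    · simp only [map_add, mul_add, add_mul, h₁, h₂]
      abel
  mul_mem' := by
    rintro f₁ f₂ ⟨g₁, hg₁, h₁⟩ ⟨g₂, hg₂, h₂⟩
    refine ⟨act (Equiv.swap i j) f₁ * g₂ + g₁ * f₂, ?_, ?_⟩
    · rw [map_mul]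
      linear_combination act (Equiv.swap i j) f₁ * hg₂ + f₂ * hg₁
    · rw [map_mul ev, ← mul_assoc, h₁, add_mul, mul_assoc, h₂]
      simp only [map_add, map_mul, mul_add, mul_assoc, add_assoc]

variable {act : Equiv.Perm ι → R →ₐ[K] R} {ev : R →ₐ[K] A} {x : ι → R} {p q : K} {i j : ι} {D : A}

lemma mem_demazureSubalgebra {f : R} : f ∈ demazureSubalgebra act ev x p q i j D ↔
    ∃ g, (x i - x j) * g = (p • x i - q • x j) * (act (Equiv.swap i j) f - f) ∧
      D * ev f = ev (act (Equiv.swap i j) f) * D + ev g :=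
  Iff.rfl

lemma IsCoordSystem.isDemazure_of_eq_top (hx : IsCoordSystem act x) (hij : i ≠ j)
    (h : demazureSubalgebra act ev x p q i j D = ⊤) : IsDemazure act ev x p q i j D := by
  intro f g hg
  obtain ⟨g', hg', hf⟩ := mem_demazureSubalgebra.1 (h ▸ Algebra.mem_top : f ∈ _)
  rwa [hx.isLeftRegular_sub hij (hg.trans hg'.symm)]

/-- In a skew group ring, this is `(p x_i - q x_j) * s`; it serves to transport information about
the kernel of `ev` along the transposition `s`. -/
def intertwiner (ev : R →ₐ[K] A) (x : ι → R) (p q : K) (i j : ι) (D : A) : A :=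
  ev (x i - x j) * D + ev (p • x i - q • x j)

lemma intertwiner_mul {f : R} (hf : f ∈ demazureSubalgebra act ev x p q i j D) :
    intertwiner ev x p q i j D * ev f =
      ev (act (Equiv.swap i j) f) * intertwiner ev x p q i j D := by
  obtain ⟨g, hg, hDf⟩ := hf
  rw [intertwiner, add_mul, mul_assoc, hDf, mul_add, ← map_mul, hg, ← mul_assoc, ← map_mul,
    add_assoc, ← map_mul, ← map_add, mul_comm (x i - x j), map_mul, mul_assoc, mul_add, ← map_mul]
  congr 3
  ring

lemma intertwiner_mul_self (hD : demazureSubalgebra act ev x p q i j D = ⊤)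
    (hact : ∀ k, act (Equiv.swap i j) (x k) = x (Equiv.swap i j k))
    (hDD : D * D = -(p + q) • D) :
    intertwiner ev x p q i j D * intertwiner ev x p q i j D =
      ev ((p • x j - q • x i) * (p • x i - q • x j)) := by
  have hτD : intertwiner ev x p q i j D * D = ev (p • x j - q • x i) * D := by
    rw [intertwiner, add_mul, mul_assoc, hDD, mul_smul_comm, ← smul_mul_assoc, ← add_mul,
      ← map_smul, ← map_add]
    congr 2
    module
  have hτ (f : R) := intertwiner_mul (hD ▸ Algebra.mem_top : f ∈ demazureSubalgebra ..)
  generalize hT : intertwiner ev x p q i j D = τ at *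
  calc τ * τ = τ * ev (x i - x j) * D + τ * ev (p • x i - q • x j) := by
        rw [mul_assoc, ← mul_add, ← intertwiner, hT]
    _ = ev (p • x j - q • x i) * (ev (x j - x i) * D + τ) := by
        rw [hτ, hτ, mul_assoc, hτD]
        simp only [map_sub, map_smul, hact, Equiv.swap_apply_left, Equiv.swap_apply_right, mul_add]
        rw [← mul_assoc, ← mul_assoc]
        simp only [← map_sub, ← map_smul, ← map_mul, mul_comm]
    _ = ev ((p • x j - q • x i) * (p • x i - q • x j)) := by
        rw [← hT, intertwiner, ← add_assoc, ← add_mul, ← map_add, map_mul]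
        simp

/-- Writing `τ` for the intertwiner, `s f * τ ^ 2 = τ * f * τ = 0` if `f` is in the kernel. -/
lemma act_swap_mul_mem_ker (hD : demazureSubalgebra act ev x p q i j D = ⊤)
    (hact : ∀ k, act (Equiv.swap i j) (x k) = x (Equiv.swap i j k))
    (hDD : D * D = -(p + q) • D) {f : R} (hf : f ∈ RingHom.ker ev) :
    act (Equiv.swap i j) f * ((p • x j - q • x i) * (p • x i - q • x j)) ∈ RingHom.ker ev := by
  rw [RingHom.mem_ker] at hf ⊢
  rw [map_mul, ← intertwiner_mul_self hD hact hDD, ← mul_assoc,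
    ← intertwiner_mul (hD ▸ Algebra.mem_top), hf, mul_zero, zero_mul]

lemma smul_sub_mem_or_ker_le_comap (hD : demazureSubalgebra act ev x p q i j D = ⊤)
    (hact : ∀ k, act (Equiv.swap i j) (x k) = x (Equiv.swap i j k))
    (hDD : D * D = -(p + q) • D) {P : Ideal R} (hP : P.IsPrime) (hker : RingHom.ker ev ≤ P) :
    (p • x j - q • x i ∈ P ∨ p • x i - q • x j ∈ P) ∨
      RingHom.ker ev ≤ P.comap (act (Equiv.swap i j)) := by
  by_contra! h
  refine h.2 fun f hf => ?_
  have := hP.mem_or_mem (hker (act_swap_mul_mem_ker hD hact hDD hf))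
  exact this.resolve_right fun hmem => (hP.mem_or_mem hmem).elim h.1.1 h.1.2

end Demazure

/-! ### Relations of the Hecke algebra -/

section Presentation

variable {K A : Type*} [Field K] [Ring A] [Algebra K A] {n ℓ : ℕ} {κ : ℕ → ℤ} {t : Kˣ}

/-- The relations of the cyclotomic Hecke algebra in terms of the elements
`X k = 1 + (t - 1) L k` and `D r = T r - t`, which generate it if `t ≠ 1`. -/
structure IsHeckeFamily (ℓ : ℕ) (κ : ℕ → ℤ) (t : Kˣ) (X : Fin n → A) (D : Fin (n - 1) → A) :
    Prop where
  commute (k m : Fin n) : Commute (X k) (X m)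
  mul_left (r : Fin (n - 1)) : D r * X (pL r) = X (pR r) * D r + X (pR r) - (t : K) • X (pL r)
  commute_of_ne (r : Fin (n - 1)) (k : Fin n) (h : k ≠ pL r ∧ k ≠ pR r) : Commute (D r) (X k)
  mul_self (r : Fin (n - 1)) : D r * D r = -((t : K) + 1) • D r
  commute_of_far (r s : Fin (n - 1)) (h : r.1 + 1 < s.1 ∨ s.1 + 1 < r.1) : Commute (D r) (D s)
  braid (r s : Fin (n - 1)) (h : s.1 = r.1 + 1) :
    D r * D s * D r - (t : K) • D r = D s * D r * D s - (t : K) • D s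
  cyclotomic (h : 0 < n) :
    ((List.range ℓ).map fun l => X ⟨0, h⟩ - algebraMap K A ((t : K) ^ κ l)).prod = 0

lemma one_add_mul_qintU {O : Type*} [CommRing O] (t : Oˣ) (d : ℤ) :
    1 + ((t : O) - 1) * qintU t d = (t ^ d : Oˣ) := by
  obtain ⟨m, rfl | rfl⟩ := d.eq_nat_or_neg
  · simp [qintU, mul_geom_sum]
  · rcases m.eq_zero_or_pos with rfl | hm
    · simp [qintU]
    rw [qintU, if_neg (by lia), neg_neg, Int.toNat_natCast]
    clear hm
    induction m with
    | zero => simp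
    | succ m ih =>
      have hpow : ((t ^ (-(m : ℤ)) : Oˣ) : O) = t * (t ^ (-((m : ℤ) + 1)) : Oˣ) := by
        rw [← Units.val_mul, ← zpow_one_add, neg_add_rev, add_neg_cancel_left]
      rw [Finset.sum_range_succ]
      push_cast
      linear_combination ih + hpow

lemma eq_iff_eq_of_sub_eq_smul_sub {c : K} (hc : c ≠ 0) {a b a' b' : A}
    (h : a - b = c • (a' - b')) : a = b ↔ a' = b' := by
  rw [← sub_eq_zero, h, smul_eq_zero_iff_right hc, sub_eq_zero]

section Relations

variable {a b c : K} {L L' S T : A}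

lemma commute_one_add_smul_iff (ha : a ≠ 0) :
    Commute (1 + a • L) (1 + a • L') ↔ L * L' = L' * L := by
  refine eq_iff_eq_of_sub_eq_smul_sub (mul_ne_zero ha ha) ?_
  simp only [mul_add, add_mul, mul_one, one_mul, smul_mul_assoc, mul_smul_comm, smul_sub]
  module

lemma commute_sub_algebraMap_one_add_smul_iff (ha : a ≠ 0) :
    Commute (T - algebraMap K A b) (1 + a • L) ↔ T * L = L * T := by
  refine eq_iff_eq_of_sub_eq_smul_sub ha ?_
  simp only [Algebra.algebraMap_eq_smul_one, mul_add, add_mul, mul_sub, sub_mul, mul_one, one_mul,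
    smul_mul_assoc, mul_smul_comm]
  module

lemma commute_sub_algebraMap_iff :
    Commute (S - algebraMap K A b) (T - algebraMap K A c) ↔ S * T = T * S := by
  refine eq_iff_eq_of_sub_eq_smul_sub (one_ne_zero (α := K)) ?_
  simp only [Algebra.algebraMap_eq_smul_one, mul_sub, sub_mul, mul_one, one_mul, smul_mul_assoc,
    mul_smul_comm]
  module

lemma sub_algebraMap_mul_self_iff :
    (T - algebraMap K A b) * (T - algebraMap K A b) = -(b + 1) • (T - algebraMap K A b) ↔
      (T + 1) * (T - algebraMap K A b) = 0 := by
  refine eq_iff_eq_of_sub_eq_smul_sub (one_ne_zero (α := K)) ?_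
  simp only [Algebra.algebraMap_eq_smul_one, add_mul, mul_sub, sub_mul, mul_one, one_mul,
    smul_mul_assoc, mul_smul_comm]
  module

lemma sub_algebraMap_mul_one_add_smul_iff (hb : b ≠ 1) :
    (T - algebraMap K A b) * (1 + (b - 1) • L) =
        (1 + (b - 1) • L') * (T - algebraMap K A b) + (1 + (b - 1) • L') -
          b • (1 + (b - 1) • L) ↔
      L' * (T - algebraMap K A b + 1) = T * L + 1 := by
  refine eq_iff_eq_of_sub_eq_smul_sub (neg_ne_zero.2 (sub_ne_zero.2 hb)) ?_
  simp only [Algebra.algebraMap_eq_smul_one, mul_add, add_mul, mul_sub, sub_mul, mul_one, one_mul,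
    smul_mul_assoc, mul_smul_comm]
  module

lemma sub_algebraMap_braid_iff (hS : (S + 1) * (S - algebraMap K A b) = 0)
    (hT : (T + 1) * (T - algebraMap K A b) = 0) :
    (S - algebraMap K A b) * (T - algebraMap K A b) * (S - algebraMap K A b) -
          b • (S - algebraMap K A b) =
        (T - algebraMap K A b) * (S - algebraMap K A b) * (T - algebraMap K A b) -
          b • (T - algebraMap K A b) ↔
      S * T * S = T * S * T := by
  refine eq_iff_eq_of_sub_eq_smul_sub (one_ne_zero (α := K)) ?_
  linear_combination (norm := skip) b • hT - b • hS
  simp only [Algebra.algebraMap_eq_smul_one, mul_sub, sub_mul, add_mul, mul_one, one_mul,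
    smul_mul_assoc, mul_smul_comm]
  module

lemma prod_one_add_smul_sub_zpow_eq_zero_iff (ht : (t : K) ≠ 1) (l : List ℕ) :
    (l.map fun i => 1 + ((t : K) - 1) • L - algebraMap K A ((t : K) ^ κ i)).prod = 0 ↔
      (l.map fun i => L - algebraMap K A (qintU t (κ i))).prod = 0 := by
  have hfactor (i : ℕ) : 1 + ((t : K) - 1) • L - algebraMap K A ((t : K) ^ κ i) =
      ((t : K) - 1) • (L - algebraMap K A (qintU t (κ i))) := by
    rw [← Units.val_zpow_eq_zpow_val, ← one_add_mul_qintU, map_add, map_mul, map_one, smul_sub,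
      Algebra.smul_def _ (algebraMap K A _), add_sub_add_left_eq_sub]
  conv_rhs =>
    rw [← smul_eq_zero_iff_right (pow_ne_zero _ (sub_ne_zero.2 ht)), List.smul_prod, List.map_map]
  simp only [hfactor, Function.comp_def]

end Relations

/-- The invertible Jucys–Murphy element `1 + (t - 1) L_k` of `H_n(K, t, κ)`. -/
noncomputable def xGen (K : Type*) [Field K] (t : Kˣ) (n ℓ : ℕ) (κ : ℕ → ℤ) (k : Fin n) :
    CycHecke K t n ℓ κ :=
  1 + ((t : K) - 1) • Lgen K t n ℓ κ k

/-- The element `T_r - t` of `H_n(K, t, κ)`, on which `T_r` acts as `-1`. -/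
noncomputable def dGen (K : Type*) [Field K] (t : Kˣ) (n ℓ : ℕ) (κ : ℕ → ℤ) (r : Fin (n - 1)) :
    CycHecke K t n ℓ κ :=
  Tgen K t n ℓ κ r - algebraMap K _ (t : K)

lemma isHeckeFamily_gen (ht : (t : K) ≠ 1) :
    IsHeckeFamily ℓ κ t (xGen K t n ℓ κ) (dGen K t n ℓ κ) := by
  have ht₁ : (t : K) - 1 ≠ 0 := sub_ne_zero.2 ht
  have hrel {a b} (h : HeckeRel K t n ℓ κ a b) := RingQuot.mkAlgHom_rel K h
  have hquad (r : Fin (n - 1)) :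
      (Tgen K t n ℓ κ r + 1) * (Tgen K t n ℓ κ r - algebraMap K _ (t : K)) = 0 := by
    simpa only [Tgen, map_mul, map_add, map_sub, map_one, map_zero, AlgHom.commutes] using
      hrel (.quad r)
  exact {
    commute k m := (commute_one_add_smul_iff ht₁).2 <| by
      simpa only [Lgen, map_mul] using hrel (.LL k m)
    mul_left r := (sub_algebraMap_mul_one_add_smul_iff ht).2 <| by
      simpa only [Lgen, Tgen, map_mul, map_add, map_sub, map_one, AlgHom.commutes] using
        hrel (.LT r)
    commute_of_ne r k h := (commute_sub_algebraMap_one_add_smul_iff ht₁).2 <| by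
      simpa only [Lgen, Tgen, map_mul] using
        hrel (.TL r k ⟨Fin.val_ne_of_ne h.1, Fin.val_ne_of_ne h.2⟩)
    mul_self r := sub_algebraMap_mul_self_iff.2 (hquad r)
    commute_of_far r s h := commute_sub_algebraMap_iff.2 <| by
      simpa only [Tgen, map_mul] using hrel (.TTfar r s h)
    braid r s h := (sub_algebraMap_braid_iff (hquad r) (hquad s)).2 <| by
      simpa only [Tgen, map_mul] using hrel (.braid r s h)
    cyclotomic h := (prod_one_add_smul_sub_zpow_eq_zero_iff ht _).2 <| by
      simpa only [Lgen, map_list_prod, List.map_map, Function.comp_def, map_sub, map_zero,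
        AlgHom.commutes] using hrel (.cyc h) }

lemma IsHeckeFamily.map_eq_of_heckeRel (ht : (t : K) ≠ 1)
    {φ : FreeAlgebra K (HeckeGen n) →ₐ[K] A}
    (H : IsHeckeFamily ℓ κ t (fun k => 1 + ((t : K) - 1) • φ (hL K k))
      fun r => φ (hT K r) - algebraMap K A t)
    {a b : FreeAlgebra K (HeckeGen n)} (hab : HeckeRel K t n ℓ κ a b) : φ a = φ b := by
  have ht₁ : (t : K) - 1 ≠ 0 := sub_ne_zero.2 ht
  have hquad (r : Fin (n - 1)) := sub_algebraMap_mul_self_iff.1 (H.mul_self r)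
  cases hab with
  | cyc h =>
    simpa [map_list_prod, Function.comp_def] using
      (prod_one_add_smul_sub_zpow_eq_zero_iff ht _).1 (H.cyclotomic h)
  | quad r => simpa using hquad r
  | LL k m => simpa using (commute_one_add_smul_iff ht₁).1 (H.commute k m)
  | TTfar r s h => simpa using commute_sub_algebraMap_iff.1 (H.commute_of_far r s h)
  | braid r s h => simpa using (sub_algebraMap_braid_iff (hquad r) (hquad s)).1 (H.braid r s h)
  | TL r k h =>
    simpa using (commute_sub_algebraMap_one_add_smul_iff ht₁).1
      (H.commute_of_ne r k ⟨Fin.ne_of_val_ne h.1, Fin.ne_of_val_ne h.2⟩)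
  | LT r => simpa using (sub_algebraMap_mul_one_add_smul_iff ht).1 (H.mul_left r)

lemma IsHeckeFamily.exists_algHom (ht : (t : K) ≠ 1) {X : Fin n → A} {D : Fin (n - 1) → A}
    (h : IsHeckeFamily ℓ κ t X D) : ∃ Φ : CycHecke K t n ℓ κ →ₐ[K] A,
      (∀ k, Φ (xGen K t n ℓ κ k) = X k) ∧ ∀ r, Φ (dGen K t n ℓ κ r) = D r := by
  let g : HeckeGen n → A
    | .L k => ((t : K) - 1)⁻¹ • (X k - 1)
    | .T r => D r + algebraMap K A t
  have hX (k : Fin n) : 1 + ((t : K) - 1) • FreeAlgebra.lift K g (hL K k) = X k := by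
    simp [hL, g, smul_inv_smul₀ (sub_ne_zero.2 ht)]
  have hD (r : Fin (n - 1)) : FreeAlgebra.lift K g (hT K r) - algebraMap K A t = D r := by
    simp [hT, g]
  have hg ⦃a b⦄ (hab : HeckeRel K t n ℓ κ a b) :
      FreeAlgebra.lift K g a = FreeAlgebra.lift K g b :=
    IsHeckeFamily.map_eq_of_heckeRel ht (by simpa only [hX, hD] using h) hab
  refine ⟨RingQuot.liftAlgHom K ⟨FreeAlgebra.lift K g, hg⟩, fun k => ?_, fun r => ?_⟩
  · simp [xGen, Lgen, RingQuot.liftAlgHom_mkAlgHom_apply, hX]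
  · simp [dGen, Tgen, RingQuot.liftAlgHom_mkAlgHom_apply, hD]

lemma cycHecke_algHom_ext (ht : (t : K) ≠ 1) {Φ Ψ : CycHecke K t n ℓ κ →ₐ[K] A}
    (hX : ∀ k, Φ (xGen K t n ℓ κ k) = Ψ (xGen K t n ℓ κ k))
    (hD : ∀ r, Φ (dGen K t n ℓ κ r) = Ψ (dGen K t n ℓ κ r)) : Φ = Ψ := by
  refine RingQuot.ringQuot_ext' _ _ _ (FreeAlgebra.hom_ext (funext fun a => ?_))
  cases a with
  | L k => exact smul_right_injective _ (sub_ne_zero.2 ht) (by simpa [xGen, Lgen, hL] using hX k)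
  | T r => simpa [dGen, Tgen, hT] using hD r

end Presentation

/-! ### The joint spectrum -/

section Spectrum

lemma exists_forall_of_forall_lt {α β : Type*} [LT α] [WellFoundedLT α] {p : α → β → Prop}
    {r : ∀ a : α, (∀ b < a, β) → β → Prop}
    (h : ∀ a (w : ∀ b < a, β), (∀ b hb, p b (w b hb)) → ∃ z, p a z ∧ r a w z) :
    ∃ w : α → β, ∀ a, p a (w a) ∧ r a (fun b _ => w b) (w a) := by
  choose z hp hr using h
  let next (a : α) (ih : ∀ b < a, {z // p b z}) : {z // p a z} :=
    ⟨z a (fun b hb => ih b hb) fun b hb => (ih b hb).2, hp ..⟩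
  let w (a : α) := WellFoundedLT.fix next a
  refine ⟨fun a => w a, fun a => ⟨(w a).2, ?_⟩⟩
  have hw : w a = next a fun b _ => w b := WellFoundedLT.fix_eq next a
  beta_reduce
  rw [hw]
  exact hr ..

open scoped IsMulCommutative in
lemma exists_algHom_apply_X_eq {K A σ : Type*} [CommRing K] [Ring A] [Algebra K A] {Y : σ → A}
    (hY : ∀ k m, Commute (Y k) (Y m)) :
    ∃ φ : MvPolynomial σ K →ₐ[K] A, ∀ k, φ (X k) = Y k := by
  have := Algebra.isMulCommutative_adjoin K (s := Set.range Y) <| by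
    rintro _ ⟨k, rfl⟩ _ ⟨m, rfl⟩
    exact hY k m
  let y (k : σ) : Algebra.adjoin K (Set.range Y) := ⟨Y k, Algebra.subset_adjoin ⟨k, rfl⟩⟩
  exact ⟨(Algebra.adjoin K (Set.range Y)).val.comp (aeval y), fun k => by simp [y]⟩

variable {K A : Type*} [Field K] [Ring A] [Algebra K A] {n ℓ : ℕ} {κ : ℕ → ℤ} {t : Kˣ}
  {Y : Fin n → A} {D : Fin (n - 1) → A}

lemma pL_ne_pR (r : Fin (n - 1)) : pL r ≠ pR r :=
  Fin.ne_of_val_ne (Nat.lt_succ_self _).ne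

lemma IsHeckeFamily.mul_right (H : IsHeckeFamily ℓ κ t Y D) (r : Fin (n - 1)) :
    D r * Y (pR r) = Y (pL r) * D r + (t : K) • Y (pL r) - Y (pR r) := by
  set T := D r + algebraMap K A t with hT
  have hinv : (D r + 1) * T = algebraMap K A t := by
    simp only [hT, mul_add, add_mul, H.mul_self, Algebra.algebraMap_eq_smul_one, mul_smul_comm,
      mul_one, one_mul]
    module
  have hleft : T * Y (pL r) = Y (pR r) * (D r + 1) := by
    rw [hT, add_mul, H.mul_left, Algebra.algebraMap_eq_smul_one, smul_mul_assoc, one_mul]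
    noncomm_ring
  have hright : (D r + 1) * Y (pR r) = Y (pL r) * T := by
    refine smul_right_injective A t.ne_zero ?_
    calc (t : K) • ((D r + 1) * Y (pR r)) = (D r + 1) * (Y (pR r) * (D r + 1)) * T := by
          rw [mul_assoc (D r + 1), mul_assoc (Y _), hinv, Algebra.algebraMap_eq_smul_one]
          simp only [mul_smul_comm, mul_one]
      _ = (t : K) • (Y (pL r) * T) := by
          rw [← hleft, ← mul_assoc, hinv, mul_assoc, Algebra.smul_def]
  rw [hT, add_mul, mul_add, one_mul, ← Algebra.commutes, ← Algebra.smul_def] at hright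
  exact eq_sub_of_add_eq hright

variable {R : Type*} [CommRing R] [Algebra K R]

lemma IsHeckeFamily.mem_demazureSubalgebra (H : IsHeckeFamily ℓ κ t Y D)
    {act : Equiv.Perm (Fin n) → R →ₐ[K] R} {ev : R →ₐ[K] A} {x : Fin n → R}
    (hact : ∀ π k, act π (x k) = x (π k)) (hev : ∀ k, ev (x k) = Y k) (r : Fin (n - 1))
    (k : Fin n) : x k ∈ demazureSubalgebra act ev x (t : K) 1 (pL r) (pR r) (D r) := by
  rw [Paper.mem_demazureSubalgebra, hact, hev, hev]
  by_cases hL : k = pL r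
  · subst hL
    refine ⟨x (pR r) - (t : K) • x (pL r), ?_, ?_⟩
    · simp only [Equiv.swap_apply_left, one_smul]
      ring
    · simp [hev, H.mul_left, add_sub_assoc]
  by_cases hR : k = pR r
  · subst hR
    refine ⟨(t : K) • x (pL r) - x (pR r), ?_, ?_⟩
    · simp only [Equiv.swap_apply_right, one_smul]
      ring
    · simp [hev, H.mul_right, add_sub_assoc]
  · exact ⟨0, by simp [Equiv.swap_apply_of_ne_of_ne hL hR],
      by simpa [Equiv.swap_apply_of_ne_of_ne hL hR] using (H.commute_of_ne r k ⟨hL, hR⟩).eq⟩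

variable {φ : MvPolynomial (Fin n) K →ₐ[K] A}

lemma IsHeckeFamily.demazureSubalgebra_rename_eq_top (H : IsHeckeFamily ℓ κ t Y D)
    (hφ : ∀ k, φ (X k) = Y k) (r : Fin (n - 1)) :
    demazureSubalgebra (fun π => rename π) φ X (t : K) 1 (pL r) (pR r) (D r) = ⊤ := by
  rw [← top_le_iff, ← adjoin_range_X, Algebra.adjoin_le_iff, Set.range_subset_iff]
  exact H.mem_demazureSubalgebra (act := fun π => rename π) (fun π => rename_X π) hφ r

lemma IsHeckeFamily.exists_mem_of_isPrime (H : IsHeckeFamily ℓ κ t Y D)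
    (hφ : ∀ k, φ (X k) = Y k) (k : Fin n) {P : Ideal (MvPolynomial (Fin n) K)} (hP : P.IsPrime)
    (hker : RingHom.ker φ ≤ P) : (∃ l < ℓ, X k - C ((t : K) ^ κ l) ∈ P) ∨
      ∃ j < k, (t : K) • X k - X j ∈ P ∨ (t : K) • X j - X k ∈ P := by
  obtain ⟨k, hk⟩ := k
  induction k generalizing P with
  | zero =>
    have hprod : ((List.range ℓ).map fun l => (X ⟨0, hk⟩ - C ((t : K) ^ κ l) :
        MvPolynomial (Fin n) K)).prod ∈ P := hker <| by
      simpa only [RingHom.mem_ker, map_list_prod, List.map_map, Function.comp_def, map_sub, hφ,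
        ← algebraMap_eq, AlgHom.commutes] using H.cyclotomic hk
    rw [← Multiset.prod_coe, hP.multiset_prod_mem_iff_exists_mem] at hprod
    exact .inl (by simpa using hprod)
  | succ m ih =>
    let r : Fin (n - 1) := ⟨m, by lia⟩
    have hlt : pL r < pR r := Fin.lt_def.2 (Nat.lt_succ_self m)
    have hswap_left : Equiv.swap (pL r) (pR r) ⟨m, (pL r).2⟩ = ⟨m + 1, hk⟩ :=
      Equiv.swap_apply_left ..
    have hswap_lt {j} (hj : j < pL r) : Equiv.swap (pL r) (pR r) j = j :=
      Equiv.swap_apply_of_ne_of_ne hj.ne (hj.trans hlt).ne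
    rcases smul_sub_mem_or_ker_le_comap (H.demazureSubalgebra_rename_eq_top hφ r)
      (fun _ => rename_X ..) (H.mul_self r) hP hker with h | hcomap
    · exact .inr ⟨pL r, hlt, by rwa [one_smul, one_smul] at h⟩
    · rcases ih (hP.comap _) hcomap (pL r).2 with ⟨l, hl, h⟩ | ⟨j, hj, h⟩
      · exact .inl ⟨l, hl, by simpa [hswap_left] using h⟩
      · exact .inr ⟨j, hj.trans hlt, by simpa [hswap_left, hswap_lt hj] using h⟩

lemma weightIdeal_le {w : Fin n → ℤ} {P : Ideal (MvPolynomial (Fin n) K)}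
    (h : ∀ k, X k - C ((t : K) ^ w k) ∈ P) : weightIdeal t w ≤ P := by
  intro p hp
  rw [mem_weightIdeal] at hp
  have hmk : Ideal.Quotient.mkₐ K P = aeval (algebraMap K _ ∘ fun k => (t : K) ^ w k) :=
    algHom_ext fun k => by rw [aeval_X]; exact Ideal.Quotient.eq.2 (h k)
  rw [← Ideal.Quotient.eq_zero_iff_mem, ← Ideal.Quotient.mkₐ_eq_mk K, hmk,
    aeval_algebraMap_apply, aeval_eq_eval, hp, map_zero]

lemma IsHeckeFamily.exists_weightIdeal_le (H : IsHeckeFamily ℓ κ t Y D)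
    (hφ : ∀ k, φ (X k) = Y k) {P : Ideal (MvPolynomial (Fin n) K)} (hP : P.IsPrime)
    (hker : RingHom.ker φ ≤ P) : ∃ w ∈ weights n ℓ κ, weightIdeal t w ≤ P := by
  obtain ⟨w, hw⟩ := exists_forall_of_forall_lt
    (p := fun k z => X k - C ((t : K) ^ z) ∈ P)
    (r := fun k w z =>
      (∃ l < ℓ, z = κ l) ∨ ∃ j, ∃ hj : j < k, w j hj = z + 1 ∨ z = w j hj + 1) <| by
      intro k w hw
      rcases H.exists_mem_of_isPrime hφ k hP hker with ⟨l, hl, h⟩ | ⟨j, hj, h | h⟩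
      · exact ⟨κ l, h, .inl ⟨l, hl, rfl⟩⟩
      · refine ⟨w j hj - 1, ?_, .inr ⟨j, hj, .inl (by ring)⟩⟩
        rw [zpow_sub_one₀ t.ne_zero, mul_comm, C_mul, ← smul_eq_C_mul,
          ← inv_smul_smul₀ t.ne_zero (X k), ← smul_sub, ← sub_add_sub_cancel _ (X j)]
        exact P.smul_of_tower_mem _ (add_mem h (hw j hj))
      · refine ⟨w j hj + 1, ?_, .inr ⟨j, hj, .inr rfl⟩⟩
        rw [zpow_add_one₀ t.ne_zero, mul_comm, C_mul, ← smul_eq_C_mul,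
          ← sub_sub_sub_cancel_left _ _ ((t : K) • X j), ← smul_sub]
        exact sub_mem (P.smul_of_tower_mem _ (hw j hj)) h
  exact ⟨w, mem_weights_of_forall_exists_lt fun k => by simpa using (hw k).2,
    weightIdeal_le fun k => (hw k).1⟩

lemma IsHeckeFamily.exists_iInf_weightIdeal_pow_le_ker (H : IsHeckeFamily ℓ κ t Y D)
    (ht : HasLargeOrder n ℓ κ t) (hφ : ∀ k, φ (X k) = Y k) :
    ∃ N, ⨅ w : weights n ℓ κ, weightIdeal t w.1 ^ N ≤ RingHom.ker φ := by
  have hrad : ⨅ w : weights n ℓ κ, weightIdeal t w.1 ≤ (RingHom.ker φ).radical := by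
    rw [Ideal.radical_eq_sInf]
    refine le_sInf fun P ⟨hker, hP⟩ => ?_
    obtain ⟨w, hw, hle⟩ := H.exists_weightIdeal_le hφ hP hker
    exact (iInf_le _ ⟨w, hw⟩).trans hle
  obtain ⟨N, hN⟩ := Ideal.exists_pow_le_of_le_radical_of_fg hrad (IsNoetherian.noetherian _)
  have := Fintype.ofFinite (weights n ℓ κ)
  refine ⟨N, (le_of_eq ?_).trans hN⟩
  have hprod (m : ℕ) : ∏ w : weights n ℓ κ, weightIdeal t w.1 ^ m =
      ⨅ w : weights n ℓ κ, weightIdeal t w.1 ^ m := by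
    simpa using Ideal.prod_eq_iInf_of_pairwise_isCoprime (s := .univ)
      ((ht.isCoprime_weightIdeal_pow m).set_pairwise _)
  rw [← hprod, Finset.prod_pow]
  simpa using congrArg (· ^ N) (hprod 1)

end Spectrum

/-! ### Change of parameter -/

section HeckeEvaluation

variable {K A : Type*} [Field K] [Ring A] [Algebra K A] {t t' : Kˣ} {n ℓ : ℕ} {κ : ℕ → ℤ}

/-- A family of elements satisfying the relations of `H_n(K, t, κ)` together with a calculus that
evaluates not only polynomials in the `X k`, but all elements of the weight ring. -/
structure IsHeckeEvaluation (t : Kˣ) (ev : WeightRing K n ℓ κ →ₐ[K] A) (D : Fin (n - 1) → A) :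
    Prop where
  isHeckeFamily : IsHeckeFamily ℓ κ t (fun k => ev (weightCoord ℓ κ t k)) D
  exists_orderIdeal_le_ker : ∃ N, orderIdeal K n ℓ κ N ≤ RingHom.ker ev

lemma HasLargeOrder.isCoordSystem (ht : HasLargeOrder n ℓ κ t) :
    IsCoordSystem (permuteWeights K ℓ κ) (weightCoord (n := n) ℓ κ t) where
  act_apply := permuteWeights_weightCoord t
  isLeftRegular_smul_sub hp q _ _ hij := isLeftRegular_smul_weightCoord_sub t hp q hij
  sub_dvd_act_swap_sub i j f := by
    obtain ⟨g, -, hg⟩ := exists_mem_orderIdeal_mul_eq_permuteWeights_swap_sub ht i j (N := 0)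
      (f := f) (by simp [mem_orderIdeal])
    exact ⟨g, hg.symm⟩

lemma HasLargeOrder.exists_isTransition (ht : HasLargeOrder n ℓ κ t)
    (ht' : HasLargeOrder n ℓ κ t') : ∃ θ : Fin n → Fin n → WeightRing K n ℓ κ,
      IsTransition (weightCoord ℓ κ t) (weightCoord ℓ κ t') (t : K) 1 (t' : K) 1 θ := by
  choose θ hθ using fun i j : Fin n => mul_dvd_mul
    (smul_weightCoord_sub_dvd (K := K) (t' := t') ht i j)
    (weightCoord_sub_dvd (K := K) (t' := t) ht' i j)
  exact ⟨θ, fun i j => by simpa using (hθ i j).symm⟩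

lemma HasLargeOrder.mem_demazureSubalgebra (ht : HasLargeOrder n ℓ κ t)
    {ev : WeightRing K n ℓ κ →ₐ[K] A} {N : ℕ} (hN : orderIdeal K n ℓ κ N ≤ RingHom.ker ev)
    (p q : K) (i j : Fin n) (D : A) {f : WeightRing K n ℓ κ}
    (hf : f ∈ orderIdeal K n ℓ κ (N + 1)) :
    f ∈ demazureSubalgebra (permuteWeights K ℓ κ) ev (weightCoord ℓ κ t) p q i j D := by
  obtain ⟨g, hg, hfg⟩ := exists_mem_orderIdeal_mul_eq_permuteWeights_swap_sub ht i j hf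
  have hev {f} (hf : f ∈ orderIdeal K n ℓ κ (N + 1)) : ev f = 0 :=
    hN (orderIdeal_antitone N.le_succ hf)
  refine ⟨(p • weightCoord ℓ κ t i - q • weightCoord ℓ κ t j) * g, by rw [← hfg]; ring, ?_⟩
  rw [hev hf, hev (permuteWeights_mem_orderIdeal _ hf), map_mul, (hN hg : ev g = 0)]
  simp

lemma IsHeckeEvaluation.isDemazure (ht : HasLargeOrder n ℓ κ t)
    {ev : WeightRing K n ℓ κ →ₐ[K] A} {D : Fin (n - 1) → A} (h : IsHeckeEvaluation t ev D)
    (r : Fin (n - 1)) : IsDemazure (permuteWeights K ℓ κ) ev (weightCoord ℓ κ t) (t : K) 1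
      (pL r) (pR r) (D r) := by
  obtain ⟨N, hN⟩ := h.exists_orderIdeal_le_ker
  refine ht.isCoordSystem.isDemazure_of_eq_top (pL_ne_pR r) (ht.subalgebra_eq_top (N := N + 1)
    (h.isHeckeFamily.mem_demazureSubalgebra (permuteWeights_weightCoord t) (fun _ => rfl) r)
    fun f hf => ht.mem_demazureSubalgebra hN _ _ _ _ _ hf)

lemma IsHeckeFamily.exists_isHeckeEvaluation (ht : HasLargeOrder n ℓ κ t) {Y : Fin n → A}
    {D : Fin (n - 1) → A} (H : IsHeckeFamily ℓ κ t Y D) :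
    ∃ ev : WeightRing K n ℓ κ →ₐ[K] A,
      (∀ k, ev (weightCoord ℓ κ t k) = Y k) ∧ IsHeckeEvaluation t ev D := by
  obtain ⟨φ, hφ⟩ := exists_algHom_apply_X_eq (K := K) H.commute
  obtain ⟨N, hN⟩ := H.exists_iInf_weightIdeal_pow_le_ker ht hφ
  obtain ⟨ev, hev, hker⟩ := ht.exists_algHom_comp_aeval_eq φ hN
  have hY (k : Fin n) : ev (weightCoord ℓ κ t k) = Y k := by
    rw [← hφ, ← hev, AlgHom.comp_apply, aeval_X]
  exact ⟨ev, hY, by simpa only [hY] using H, N, hker⟩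

lemma HasLargeOrder.prod_weightCoord_sub_charge_dvd (ht : HasLargeOrder n ℓ κ t) (i : Fin n) :
    ((List.range ℓ).map fun l => weightCoord ℓ κ t i -
        algebraMap K (WeightRing K n ℓ κ) ((t : K) ^ κ l)).prod ∣
      ((List.range ℓ).map fun l => weightCoord ℓ κ t' i -
        algebraMap K (WeightRing K n ℓ κ) ((t' : K) ^ κ l)).prod := by
  simp only [← Multiset.prod_coe, ← Multiset.map_coe]
  exact Multiset.prod_dvd_prod_of_dvd _ _ fun l hl =>
    weightCoord_sub_charge_dvd ht i (by simpa using hl)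

section Transition

variable {ev : WeightRing K n ℓ κ →ₐ[K] A} {D : Fin (n - 1) → A}
  {θ : Fin n → Fin n → WeightRing K n ℓ κ}

lemma IsHeckeEvaluation.transition_braid (ht : HasLargeOrder n ℓ κ t)
    (ht' : HasLargeOrder n ℓ κ t') (h : IsHeckeEvaluation t ev D)
    (hθ : IsTransition (weightCoord ℓ κ t) (weightCoord ℓ κ t') (t : K) 1 (t' : K) 1 θ)
    {r s : Fin (n - 1)} (hrs : s.1 = r.1 + 1) {D' : Fin (n - 1) → A}
    (hD' : ∀ r, D' r = ev (θ (pL r) (pR r)) * D r) :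
    D' r * D' s * D' r - (t' : K) • D' r = D' s * D' r * D' s - (t' : K) • D' s := by
  have hx := ht.isCoordSystem (K := K)
  have hx' := ht'.isCoordSystem (K := K)
  have hsr : pL s = pR r := Fin.ext hrs
  have hij : pL r ≠ pR r := pL_ne_pR r
  have hjk : pR r ≠ pR s := hsr ▸ pL_ne_pR s
  have hik : pL r ≠ pR s := Fin.ne_of_val_ne (by simp [pL, pR, hrs]; lia)
  have hDr := h.isDemazure ht r
  have hDs := h.isDemazure ht s
  have hDDr := h.isHeckeFamily.mul_self r
  have hDDs := h.isHeckeFamily.mul_self s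
  rw [hsr] at hDs
  rw [add_comm] at hDDs
  have hr := hDr.transition_braid hx hx' t.ne_zero hθ hij hik hjk hDs hDDr
  have hs := hDs.symm.transition_braid hx hx' one_ne_zero hθ.symm hjk.symm hik.symm hij.symm
    hDr.symm hDDs
  have hθθθ : θ (pR r) (pR s) * θ (pL r) (pR s) * θ (pL r) (pR r) =
      θ (pL r) (pR r) * θ (pL r) (pR s) * θ (pR r) (pR s) := by ring
  rw [mul_one, mul_one] at hr
  rw [one_mul, one_mul, hθθθ] at hs
  rw [hD', hD', hsr, hr, hs, h.isHeckeFamily.braid r s hrs]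

lemma IsHeckeEvaluation.transition (ht : HasLargeOrder n ℓ κ t)
    (ht' : HasLargeOrder n ℓ κ t') (h : IsHeckeEvaluation t ev D)
    (hθ : IsTransition (weightCoord ℓ κ t) (weightCoord ℓ κ t') (t : K) 1 (t' : K) 1 θ) :
    IsHeckeEvaluation t' ev fun r => ev (θ (pL r) (pR r)) * D r := by
  have hx := ht.isCoordSystem (K := K)
  have hx' := ht'.isCoordSystem (K := K)
  have hD (r : Fin (n - 1)) := h.isDemazure ht r
  have hD' (r : Fin (n - 1)) := (hD r).transition hx hx' hθ (pL_ne_pR r)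
  refine ⟨?_, h.exists_orderIdeal_le_ker⟩
  exact {
    commute k m := (Commute.all _ _).map ev
    mul_left r := by
      have := hD' r (weightCoord ℓ κ t' (pL r))
        (weightCoord ℓ κ t' (pR r) - (t' : K) • weightCoord ℓ κ t' (pL r)) (by
          rw [permuteWeights_weightCoord, Equiv.swap_apply_left, one_smul]; ring)
      simpa [permuteWeights_weightCoord, add_sub_assoc] using this
    commute_of_ne r k hk := (hD' r).commute_ev <| by
      rw [permuteWeights_weightCoord, Equiv.swap_apply_of_ne_of_ne hk.1 hk.2]
    mul_self r := (hD r).transition_mul_self hx hx' t.ne_zero hθ (pL_ne_pR r)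
      (h.isHeckeFamily.mul_self r)
    commute_of_far r s hrs := (hD r).commute_transition hx hx' t.ne_zero hθ (pL_ne_pR r)
      (pL_ne_pR s)
      (Fin.ne_of_val_ne (by simp [pL]; lia)) (Fin.ne_of_val_ne (by simp [pL, pR]; lia))
      (Fin.ne_of_val_ne (by simp [pL, pR]; lia)) (Fin.ne_of_val_ne (by simp [pR]; lia)) (hD s)
      (h.isHeckeFamily.commute_of_far r s hrs)
    braid r s hrs := h.transition_braid ht ht' hθ hrs fun _ => rfl
    cyclotomic hn := by
      have := map_dvd ev (ht.prod_weightCoord_sub_charge_dvd (t' := t') ⟨0, hn⟩)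
      simpa [map_list_prod, Function.comp_def, h.isHeckeFamily.cyclotomic hn] using this }

end Transition
end HeckeEvaluation

section Isomorphism

variable {K A : Type*} [Field K] [Ring A] [Algebra K A] {t t' : Kˣ} {n ℓ : ℕ} {κ : ℕ → ℤ}

lemma HasLargeOrder.ne_one (ht : HasLargeOrder n ℓ κ t) (hn : 0 < n) (hℓ : 0 < ℓ) :
    (t : K) ≠ 1 := by
  simpa using ht 0 hℓ 0 hℓ 1 one_pos (by lia)

lemma IsHeckeEvaluation.exists_algHom (ht : HasLargeOrder n ℓ κ t) (ht₁ : (t : K) ≠ 1)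
    {ev : WeightRing K n ℓ κ →ₐ[K] CycHecke K t n ℓ κ}
    (hev : ∀ k, ev (weightCoord ℓ κ t k) = xGen K t n ℓ κ k)
    (h : IsHeckeEvaluation t ev (dGen K t n ℓ κ)) {ev' : WeightRing K n ℓ κ →ₐ[K] A}
    {D : Fin (n - 1) → A} (h' : IsHeckeEvaluation t ev' D) :
    ∃ Φ : CycHecke K t n ℓ κ →ₐ[K] A,
      (∀ f, Φ (ev f) = ev' f) ∧ ∀ r, Φ (dGen K t n ℓ κ r) = D r := by
  obtain ⟨Φ, hX, hD⟩ := h'.isHeckeFamily.exists_algHom ht₁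
  obtain ⟨N, hN⟩ := h.exists_orderIdeal_le_ker
  obtain ⟨N', hN'⟩ := h'.exists_orderIdeal_le_ker
  have htop : AlgHom.equalizer (Φ.comp ev) ev' = ⊤ := by
    refine ht.subalgebra_eq_top (N := max N N') (fun k => ?_) fun f hf => ?_
    · rw [AlgHom.mem_equalizer, AlgHom.comp_apply, hev, hX]
    · have hf₀ : ev f = 0 := hN (orderIdeal_antitone (le_max_left N N') hf)
      have hf₀' : ev' f = 0 := hN' (orderIdeal_antitone (le_max_right N N') hf)
      rw [AlgHom.mem_equalizer, AlgHom.comp_apply, hf₀, hf₀', map_zero]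
  exact ⟨Φ, fun f => (htop ▸ Algebra.mem_top : f ∈ AlgHom.equalizer (Φ.comp ev) ev'), hD⟩

lemma heckeRel_zero (t t' : Kˣ) : HeckeRel K t 0 ℓ κ = HeckeRel K t' 0 ℓ κ := by
  funext a b
  refine propext ⟨fun h => ?_, fun h => ?_⟩ <;> cases h with
  | cyc h => exact absurd h (lt_irrefl 0)
  | quad r | LL r | TTfar r | braid r | TL r | LT r => exact r.elim0

/-- Each of the two algebras evaluates the weight ring, and rescaling the elements `T_r - t` by a
transition turns its evaluation into one for the other parameter; transitions in opposite
directions are inverse to each other, hence so are the induced homomorphisms. -/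
theorem large_e_isomorphism_general {K : Type*} [Field K] {n ℓ : ℕ} (hℓ : 1 ≤ ℓ) {κ : ℕ → ℤ}
    {t t' : Kˣ} (ht : HasLargeOrder n ℓ κ t) (ht' : HasLargeOrder n ℓ κ t') :
    Nonempty (CycHecke K t n ℓ κ ≃ₐ[K] CycHecke K t' n ℓ κ) := by
  rcases n.eq_zero_or_pos with rfl | hn
  · change Nonempty (RingQuot _ ≃ₐ[K] RingQuot _)
    rw [heckeRel_zero t t']
    exact ⟨AlgEquiv.refl⟩
  have ht₁ := ht.ne_one hn hℓ
  have ht₁' := ht'.ne_one hn hℓ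
  obtain ⟨ev, hX, h⟩ := (isHeckeFamily_gen (ℓ := ℓ) (κ := κ) ht₁).exists_isHeckeEvaluation ht
  obtain ⟨ev', hX', h'⟩ := (isHeckeFamily_gen ht₁').exists_isHeckeEvaluation ht'
  obtain ⟨θ, hθ⟩ := ht.exists_isTransition (K := K) ht'
  obtain ⟨θ', hθ'⟩ := ht'.exists_isTransition (K := K) ht
  obtain ⟨Φ, hΦ, hΦD⟩ := h.exists_algHom ht ht₁ hX (h'.transition ht' ht hθ')
  obtain ⟨Ψ, hΨ, hΨD⟩ := h'.exists_algHom ht' ht₁' hX' (h.transition ht ht' hθ)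
  have hθθ' (r : Fin (n - 1)) : θ (pL r) (pR r) * θ' (pL r) (pR r) = 1 :=
    hθ.mul_eq_one ht.isCoordSystem ht'.isCoordSystem t.ne_zero t'.ne_zero hθ' (pL_ne_pR r)
  refine ⟨AlgEquiv.ofAlgHom Φ Ψ (cycHecke_algHom_ext ht₁' (fun k => ?_) fun r => ?_)
    (cycHecke_algHom_ext ht₁ (fun k => ?_) fun r => ?_)⟩
  · rw [AlgHom.comp_apply, AlgHom.id_apply, ← hX', hΨ, hΦ]
  · rw [AlgHom.comp_apply, AlgHom.id_apply, hΨD, map_mul, hΦ, hΦD, ← mul_assoc, ← map_mul, hθθ',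
      map_one, one_mul]
  · rw [AlgHom.comp_apply, AlgHom.id_apply, ← hX, hΦ, hΨ]
  · rw [AlgHom.comp_apply, AlgHom.id_apply, hΦD, map_mul, hΨ, hΨD, ← mul_assoc, ← map_mul,
      mul_comm, hθθ', map_one, one_mul]

end Isomorphism

end Paper

namespace Paper

/-- if `e > max{n + κ_k - κ_l}`, `ξ₀` is not a root of unity and `ξ_e`
is a primitive `e`-th root of unity, then `H_n(K, ξ₀, κ) ≅ H_n(K, ξ_e, κ)` as
`K`-algebras. -/
theorem large_e_isomorphism (n ℓ : ℕ) (hℓ : 1 ≤ ℓ) (κ : ℕ → ℤ) (e : ℕ)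
    (he : ∀ k l, k < ℓ → l < ℓ → (n : ℤ) + κ k - κ l < (e : ℤ))
    (K : Type) [Field K] (ξ₀ ξe : Kˣ)
    (h0 : ∀ d : ℕ, 0 < d → (ξ₀ : K) ^ d ≠ 1)
    (hε : IsPrimitiveRoot (ξe : K) e) :
    Nonempty (CycHecke K ξ₀ n ℓ κ ≃ₐ[K] CycHecke K ξe n ℓ κ) :=
  large_e_isomorphism_general hℓ (hasLargeOrder_of_forall_pow_ne_one h0)
    (hasLargeOrder_of_isPrimitiveRoot hε he)

end Paper
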